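/- arXiv:2108.05687 — 2 statements merged into one kernel-verified Lean document; each statement's English description precedes it below -/
import Mathlib

section
/- Let K₃ denote the triangle. For every even n and every integer m with 1 ≤ m ≤ n²/4, the probability that G_{n,m}^{K₃} is K₃-free (i.e., contains no canonical copy of the triangle) is at least (2e)^{−2m}. -/
open Finset

variable {k n : ℕ}

/-- Number of edges of `G ⊆ K_n^H` between class `i` restricted to `A` and class `j`
restricted to `B`, counted as ordered pairs `(u, v) ∈ V_i × V_j`. -/
noncomputable def pairCountIn (G : SimpleGraph (Fin k × Fin n)) (i j : Fin k)
    (A B : Finset (Fin n)) : ℕ :=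
  Nat.card {p : Fin n × Fin n // p.1 ∈ A ∧ p.2 ∈ B ∧ G.Adj (i, p.1) (j, p.2)}

/-- Number of edges of `G ⊆ K_n^H` between classes `V_i` and `V_j`. -/
noncomputable def pairCount (G : SimpleGraph (Fin k × Fin n)) (i j : Fin k) : ℕ :=
  Nat.card {p : Fin n × Fin n // G.Adj (i, p.1) (j, p.2)}

/-- The density `d(A, B)` of the bipartite graph `G(V_i, V_j)` between `A ⊆ V_i`, `B ⊆ V_j`. -/
noncomputable def density (G : SimpleGraph (Fin k × Fin n)) (i j : Fin k)
    (A B : Finset (Fin n)) : ℝ :=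
  (pairCountIn G i j A B : ℝ) / ((A.card : ℝ) * (B.card : ℝ))

/-- The pair `(V_i, V_j)` of `G` is `(ε, λ)`-lower-regular. -/
def LowerRegularPair (ε lam : ℝ) (G : SimpleGraph (Fin k × Fin n)) (i j : Fin k) : Prop :=
  ∀ A B : Finset (Fin n), ε * n ≤ (A.card : ℝ) → ε * n ≤ (B.card : ℝ) →
    lam * density G i j Finset.univ Finset.univ ≤ density G i j A B

/-- The pair `(V_i, V_j)` of `G` is `(ε, δ)`-lower-regular for a function `δ`. -/
def FnLowerRegularPair (ε : ℝ) (δ : ℝ → ℝ) (G : SimpleGraph (Fin k × Fin n)) (i j : Fin k) :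
    Prop :=
  ∀ A B : Finset (Fin n), ε * n ≤ (A.card : ℝ) → ε * n ≤ (B.card : ℝ) →
    δ (min (A.card : ℝ) (B.card : ℝ) / n) * density G i j Finset.univ Finset.univ
      < density G i j A B

/-- `G` is a subgraph of `K_n^H`: edges only between classes `V_i, V_j` with `ij ∈ E(H)`. -/
def IsSubgraphKnH (H : SimpleGraph (Fin k)) (G : SimpleGraph (Fin k × Fin n)) : Prop :=
  ∀ ⦃x y : Fin k × Fin n⦄, G.Adj x y → H.Adj x.1 y.1

/-- `G ∈ 𝒢(H, n, m)`: a subgraph of `K_n^H` with exactly `m` edges between `V_i` and `V_j`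
for each edge `ij` of `H`. -/
def MemFamily (H : SimpleGraph (Fin k)) (m : ℕ) (G : SimpleGraph (Fin k × Fin n)) : Prop :=
  IsSubgraphKnH H G ∧ ∀ i j, H.Adj i j → pairCount G i j = m

/-- `f` selects a canonical copy of `H` in `G ⊆ K_n^H` (vertex `i` goes to `V_i`). -/
def IsCanonicalCopy (H : SimpleGraph (Fin k)) (G : SimpleGraph (Fin k × Fin n))
    (f : Fin k → Fin n) : Prop :=
  ∀ ⦃i j⦄, H.Adj i j → G.Adj (i, f i) (j, f j)

/-- The number of canonical copies of `H` in `G ⊆ K_n^H`. -/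
noncomputable def copyCount (H : SimpleGraph (Fin k)) (G : SimpleGraph (Fin k × Fin n)) : ℕ :=
  Nat.card {f : Fin k → Fin n // IsCanonicalCopy H G f}

/-- `deg_H(e, G)`: the number of canonical copies of `H` in `G` containing both coordinates
of the pair `e ∈ V_a × V_b`. -/
noncomputable def degPair (H : SimpleGraph (Fin k)) (G : SimpleGraph (Fin k × Fin n))
    (a b : Fin k) (e : Fin n × Fin n) : ℕ :=
  Nat.card {f : Fin k → Fin n // IsCanonicalCopy H G f ∧ f a = e.1 ∧ f b = e.2}

/-- The number of edges of a graph. -/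
noncomputable def edgeCount (H : SimpleGraph (Fin k)) : ℕ := Nat.card H.edgeSet

/-- The 2-density `m₂(H) = max{(e(H')-1)/(v(H')-2) : H' ⊆ H, v(H') > 2}`, where a subgraph
is given by a vertex set `V'` and an edge subgraph `H'` with all edges inside `V'`. -/
noncomputable def twoDensity (H : SimpleGraph (Fin k)) : ℝ :=
  sSup {q : ℝ | ∃ (V' : Finset (Fin k)) (H' : SimpleGraph (Fin k)),
    H' ≤ H ∧ (∀ ⦃x y⦄, H'.Adj x y → x ∈ V' ∧ y ∈ V') ∧ 2 < V'.card ∧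
    q = ((edgeCount H' : ℝ) - 1) / ((V'.card : ℝ) - 2)}

/-!
Fix two edges `ab`, `ac` of `H` and halve `V_a` into `A` and its complement. If every edge of `G`
between `V_a` and `V_b` starts in `A` and every edge between `V_a` and `V_c` starts outside `A`,
then `G` is `H`-free, as no vertex of `V_a` can play the role of `a`. The edges of `G` over
different edges of `H` are chosen independently, so the proportion of such `G` in `𝒢(H, n, m)` is
`C(|A| n, m) C((n - |A|) n, m) / C(n², m)²`, and for `m ≤ n² / 4` this is at least `9⁻ᵐ`, while
`3 ≤ 2e`.
-/

section Binomial

/-- The worst case of `((N - i) / (N / 2 - i)) ^ 2 ≤ 9` is `i = N / 4`; that `i` stays below it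
by one unit makes up for `a` and `b` differing by up to `√N`. -/
lemma sq_sub_le_nine_mul {a b i : ℤ} (hi : 0 ≤ i) (hab : (a - b) ^ 2 ≤ a + b)
    (hiab : 4 * (i + 1) ≤ a + b) : (a + b - i) ^ 2 ≤ 9 * ((a - i) * (b - i)) := by
  set s := a + b - 4 * (i + 1) with hs
  have hs0 : 0 ≤ s := sub_nonneg.2 hiab
  have hdiff : 4 * (9 * ((a - i) * (b - i)) - (a + b - i) ^ 2)
      = 9 * (a + b - (a - b) ^ 2) + 5 * s ^ 2 + 12 * (i * s) + 31 * s + 12 * i + 44 := by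
    rw [hs]; ring
  linarith [hdiff, mul_nonneg hi hs0, sq_nonneg s]

lemma sq_tsub_le_nine_mul {a b i : ℕ} (hab : ((a : ℤ) - b) ^ 2 ≤ a + b)
    (hiab : 4 * (i + 1) ≤ a + b) : (a + b - i) ^ 2 ≤ 9 * ((a - i) * (b - i)) := by
  have hle : ((a : ℤ) + b - i) ^ 2 ≤ 9 * ((a - i) * (b - i)) :=
    sq_sub_le_nine_mul (by positivity) hab (by exact_mod_cast hiab)
  have hsum : 0 < (a : ℤ) + b - i := by omega
  have hprod : 0 < ((a : ℤ) - i) * (b - i) := by linarith [pow_pos hsum 2]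
  obtain ⟨ha, hb⟩ | ⟨ha, hb⟩ := pos_and_pos_or_neg_and_neg_of_mul_pos hprod
  · zify [show i ≤ a + b by omega, show i ≤ a by omega, show i ≤ b by omega]
    exact hle
  · omega

lemma sq_choose_add_le_nine_pow_mul {a b m : ℕ} (hab : ((a : ℤ) - b) ^ 2 ≤ a + b)
    (hm : 4 * m ≤ a + b) :
    (a + b).choose m ^ 2 ≤ 9 ^ m * (a.choose m * b.choose m) := by
  induction m with
  | zero => simp
  | succ i ih =>
    refine Nat.le_of_mul_le_mul_right ?_ (pow_pos i.succ_pos 2)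
    calc (a + b).choose (i + 1) ^ 2 * (i + 1) ^ 2
        = (a + b).choose i ^ 2 * (a + b - i) ^ 2 := by
          rw [← mul_pow, Nat.choose_succ_right_eq, mul_pow]
      _ ≤ 9 ^ i * (a.choose i * b.choose i) * (9 * ((a - i) * (b - i))) :=
          Nat.mul_le_mul (ih (by omega)) (sq_tsub_le_nine_mul hab hm)
      _ = 9 ^ (i + 1) * (a.choose i * (a - i) * (b.choose i * (b - i))) := by ring
      _ = 9 ^ (i + 1) * (a.choose (i + 1) * b.choose (i + 1)) * (i + 1) ^ 2 := by
          rw [← Nat.choose_succ_right_eq, ← Nat.choose_succ_right_eq]; ring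

end Binomial

section Family

open scoped Classical in
lemma card_subgraphs_eq_card_filter_powerset {V : Type*} [Fintype V] (K : SimpleGraph V)
    (P : Finset (Sym2 V) → Prop) [DecidablePred P] :
    Nat.card {G : SimpleGraph V // G ≤ K ∧ P G.edgeFinset}
      = #{t ∈ K.edgeFinset.powerset | P t} := by
  have exists_edgeFinset_eq {t : Finset (Sym2 V)} (ht : t ⊆ K.edgeFinset) :
      ∃ G : SimpleGraph V, G.edgeFinset = t := by
    refine ⟨SimpleGraph.fromEdgeSet t, coe_injective ?_⟩
    rw [SimpleGraph.coe_edgeFinset, SimpleGraph.edgeSet_fromEdgeSet, sdiff_eq_left,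
      Set.disjoint_left]
    exact fun x hx ↦ K.not_isDiag_of_mem_edgeSet (SimpleGraph.mem_edgeFinset.1 (ht hx))
  rw [Nat.card_eq_fintype_card, Fintype.card_subtype]
  refine card_nbij (fun G ↦ G.edgeFinset) (fun G hG ↦ by simpa using hG)
    (fun G _ G' _ h ↦ SimpleGraph.edgeFinset_inj.1 h) fun t ht ↦ ?_
  obtain ⟨htK, hPt⟩ : t ⊆ K.edgeFinset ∧ P t := by simpa using ht
  obtain ⟨G, rfl⟩ := exists_edgeFinset_eq htK
  exact ⟨G, by simpa using ⟨SimpleGraph.edgeFinset_subset_edgeFinset.1 htK, hPt⟩, rfl⟩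

lemma card_filter_powerset_card_fiber {α β : Type*} [Fintype β] [DecidableEq β] (f : α → β)
    (s : Finset α) (m : β → ℕ) :
    #{t ∈ s.powerset | ∀ b, #{x ∈ t | f x = b} = m b}
      = ∏ b, (#{x ∈ s | f x = b}).choose (m b) := by
  classical
  have fiber_glue {g : β → Finset α} (hg : ∀ b, g b ⊆ {x ∈ s | f x = b}) (b : β) :
      {x ∈ {x ∈ s | x ∈ g (f x)} | f x = b} = g b := by
    ext x
    simp only [mem_filter]
    constructor
    · rintro ⟨⟨-, hx⟩, rfl⟩
      exact hx
    · intro hx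
      obtain ⟨hxs, rfl⟩ := mem_filter.1 (hg b hx)
      exact ⟨⟨hxs, hx⟩, rfl⟩
  simp_rw [← card_powersetCard, ← Fintype.card_piFinset]
  refine card_nbij' (fun t b ↦ {x ∈ t | f x = b}) (fun g ↦ {x ∈ s | x ∈ g (f x)}) ?_ ?_ ?_ ?_
  · intro t ht
    simp only [coe_filter, Set.mem_ofPred_eq, mem_powerset] at ht
    simp only [mem_coe, Fintype.mem_piFinset, mem_powersetCard]
    exact fun b ↦ ⟨filter_subset_filter _ ht.1, ht.2 b⟩
  · intro g hg
    simp only [mem_coe, Fintype.mem_piFinset, mem_powersetCard] at hg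
    simp only [coe_filter, Set.mem_ofPred_eq, mem_powerset]
    exact ⟨filter_subset _ _, fun b ↦ by rw [fiber_glue fun b ↦ (hg b).1, (hg b).2]⟩
  · intro t ht
    simp only [coe_filter, Set.mem_ofPred_eq, mem_powerset] at ht
    ext x
    simpa using @ht.1 x
  · intro g hg
    simp only [mem_coe, Fintype.mem_piFinset, mem_powersetCard] at hg
    exact funext (fiber_glue fun b ↦ (hg b).1)

open scoped Classical in
/-- The edges of `G` lying over `e`: for `e = s(i, j)`, those between `V_i` and `V_j`. Indexing by
unordered pairs spares choosing an orientation of the edges of `H`. -/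
noncomputable def edgesOver (G : SimpleGraph (Fin k × Fin n)) (e : Sym2 (Fin k)) :
    Finset (Sym2 (Fin k × Fin n)) :=
  {x ∈ G.edgeFinset | x.map Prod.fst = e}

variable {G : SimpleGraph (Fin k × Fin n)} {H : SimpleGraph (Fin k)} {i j : Fin k} {m : ℕ}

lemma mk_mem_edgesOver {x y : Fin k × Fin n} :
    s(x, y) ∈ edgesOver G s(i, j) ↔ G.Adj x y ∧ s(x.1, y.1) = s(i, j) := by
  simp [edgesOver]

lemma card_edgesOver (G : SimpleGraph (Fin k × Fin n)) (hij : i ≠ j) :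
    #(edgesOver G s(i, j)) = pairCount G i j := by
  classical
  rw [pairCount, Nat.card_eq_fintype_card, Fintype.card_subtype]
  symm
  refine card_nbij (fun p ↦ s((i, p.1), (j, p.2))) ?_ ?_ ?_
  · intro p hp
    exact mk_mem_edgesOver.2 ⟨(mem_filter.1 hp).2, rfl⟩
  · rintro ⟨u, v⟩ - ⟨u', v'⟩ - h
    simpa [hij] using h
  · rintro ⟨⟨i', u⟩, ⟨j', v⟩⟩ hx
    obtain ⟨hadj, hcls⟩ := mk_mem_edgesOver.1 hx
    obtain ⟨rfl, rfl⟩ | ⟨rfl, rfl⟩ := Sym2.eq_iff.1 hcls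
    · exact ⟨(u, v), by simpa using hadj, rfl⟩
    · exact ⟨(v, u), by simpa using hadj.symm, Sym2.eq_swap⟩

open scoped Classical in
lemma memFamily_iff_card_edgesOver :
    MemFamily H m G ↔ ∀ e, #(edgesOver G e) = if e ∈ H.edgeSet then m else 0 := by
  constructor
  · rintro ⟨hsub, hcount⟩ ⟨i, j⟩
    split_ifs with hij
    · rw [card_edgesOver G (H.ne_of_adj hij), hcount i j hij]
    · refine card_eq_zero.2 (eq_empty_of_forall_notMem ?_)
      rintro ⟨x, y⟩ hxy
      obtain ⟨hadj, hcls⟩ := mk_mem_edgesOver.1 hxy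
      have hmem : s(i, j) ∈ H.edgeSet := hcls ▸ H.mem_edgeSet.2 (hsub hadj)
      exact hij hmem
  · refine fun hG ↦ ⟨fun x y hxy ↦ ?_, fun i j hij ↦ ?_⟩
    · have hmem : s(x, y) ∈ edgesOver G s(x.1, y.1) := mk_mem_edgesOver.2 ⟨hxy, rfl⟩
      by_contra hH
      exact (card_ne_zero_of_mem hmem) ((hG _).trans (if_neg hH))
    · rw [← card_edgesOver G hij.ne, hG, if_pos (H.mem_edgeSet.2 hij)]

open scoped Classical in
lemma card_subgraphs_memFamily (H : SimpleGraph (Fin k)) (m : ℕ) (K : SimpleGraph (Fin k × Fin n)) :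
    Nat.card {G : SimpleGraph (Fin k × Fin n) // G ≤ K ∧ MemFamily H m G}
      = ∏ e ∈ H.edgeFinset, (#(edgesOver K e)).choose m := by
  calc Nat.card {G : SimpleGraph (Fin k × Fin n) // G ≤ K ∧ MemFamily H m G}
      = #{t ∈ K.edgeFinset.powerset | ∀ e, #{x ∈ t | x.map Prod.fst = e}
          = if e ∈ H.edgeSet then m else 0} := by
        simp_rw [memFamily_iff_card_edgesOver, edgesOver]
        exact card_subgraphs_eq_card_filter_powerset K
          fun t ↦ ∀ e, #{x ∈ t | x.map Prod.fst = e} = if e ∈ H.edgeSet then m else 0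
    _ = ∏ e, (#(edgesOver K e)).choose (if e ∈ H.edgeSet then m else 0) :=
        card_filter_powerset_card_fiber _ _ _
    _ = ∏ e ∈ H.edgeFinset, (#(edgesOver K e)).choose m := by
        rw [← prod_subset (subset_univ H.edgeFinset)]
        · exact prod_congr rfl fun e he ↦ by rw [if_pos (SimpleGraph.mem_edgeFinset.1 he)]
        · intro e _ he
          rw [if_neg (by simpa using he), Nat.choose_zero_right]

lemma pairCount_eq_card_mul {A : Finset (Fin n)}
    (h : ∀ u v, G.Adj (i, u) (j, v) ↔ u ∈ A) : pairCount G i j = #A * n := by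
  calc pairCount G i j = Nat.card {p : Fin n × Fin n // p ∈ A ×ˢ (univ : Finset (Fin n))} := by
        simp only [pairCount, h, mem_product, mem_univ, and_true]
    _ = #A * n := by
        rw [Nat.card_eq_fintype_card, Fintype.card_coe, card_product, card_fin]

lemma pairCount_eq_sq (h : ∀ u v, G.Adj (i, u) (j, v)) : pairCount G i j = n * n := by
  simpa using pairCount_eq_card_mul (A := univ) (by simpa using h)

open scoped Classical in
lemma card_memFamily (H : SimpleGraph (Fin k)) (m : ℕ) :
    Nat.card {G : SimpleGraph (Fin k × Fin n) // MemFamily H m G}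
      = (n * n).choose m ^ #H.edgeFinset := by
  calc Nat.card {G : SimpleGraph (Fin k × Fin n) // MemFamily H m G}
      = ∏ e ∈ H.edgeFinset, (#(edgesOver (⊤ : SimpleGraph (Fin k × Fin n)) e)).choose m := by
        simpa only [le_top, true_and] using
          card_subgraphs_memFamily H m (⊤ : SimpleGraph (Fin k × Fin n))
    _ = (n * n).choose m ^ #H.edgeFinset := by
        refine prod_eq_pow_card ?_
        rintro ⟨i, j⟩ hij
        have hne : i ≠ j := (SimpleGraph.mem_edgeFinset.1 hij).ne
        rw [card_edgesOver _ hne, pairCount_eq_sq fun u v ↦ by simp [hne]]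

end Family

section SplitHost

variable {a b c : Fin k} {A : Finset (Fin n)}

/-- The graph on `V_1 ∪ … ∪ V_k` in which `A ⊆ V_a` has no neighbours in `V_c`, the complement of
`A` in `V_a` has none in `V_b`, and all other pairs of vertices are adjacent. Its subgraphs contain
no canonical copy of a graph with edges `ab` and `ac`. -/
def splitHost (a b c : Fin k) (A : Finset (Fin n)) : SimpleGraph (Fin k × Fin n) :=
  (SimpleGraph.fromRel fun x y ↦ x.1 = a ∧ (x.2 ∈ A ∧ y.1 = c ∨ x.2 ∉ A ∧ y.1 = b))ᶜ

lemma not_isCanonicalCopy_of_le_splitHost {H : SimpleGraph (Fin k)}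
    {G : SimpleGraph (Fin k × Fin n)} (hG : G ≤ splitHost a b c A) (hab : H.Adj a b)
    (hac : H.Adj a c) (f : Fin k → Fin n) : ¬ IsCanonicalCopy H G f := by
  intro hf
  by_cases hA : f a ∈ A
  · have hadj := hG (hf hac)
    simp [splitHost, hA, hac.ne] at hadj
  · have hadj := hG (hf hab)
    simp [splitHost, hA, hab.ne] at hadj

lemma pairCount_splitHost_left (hab : a ≠ b) (hbc : b ≠ c) :
    pairCount (splitHost a b c A) a b = #A * n := by
  refine pairCount_eq_card_mul fun u v ↦ ?_
  simp [splitHost, hab, hbc, hab.symm]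

lemma pairCount_splitHost_right (hac : a ≠ c) (hbc : b ≠ c) :
    pairCount (splitHost a b c A) a c = #Aᶜ * n := by
  refine pairCount_eq_card_mul fun u v ↦ ?_
  simp [splitHost, hac, hbc.symm, hac.symm]

lemma pairCount_splitHost_of_ne {i j : Fin k} (hij : i ≠ j) (hb : s(i, j) ≠ s(a, b))
    (hc : s(i, j) ≠ s(a, c)) : pairCount (splitHost a b c A) i j = n * n := by
  refine pairCount_eq_sq fun u v ↦ ?_
  simp only [ne_eq, Sym2.eq_iff] at hb hc
  simp only [splitHost, SimpleGraph.compl_adj, ne_eq, Prod.mk.injEq, hij, false_and,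
    not_false_eq_true, SimpleGraph.fromRel_adj, true_and, not_or, not_and]
  tauto

lemma card_subgraphs_splitHost_memFamily {H : SimpleGraph (Fin k)} (hab : H.Adj a b)
    (hac : H.Adj a c) (hbc : b ≠ c) (A : Finset (Fin n)) (m : ℕ) :
    (n * n).choose m ^ 2 *
        Nat.card {G : SimpleGraph (Fin k × Fin n) // G ≤ splitHost a b c A ∧ MemFamily H m G}
      = (#A * n).choose m * (#Aᶜ * n).choose m *
        Nat.card {G : SimpleGraph (Fin k × Fin n) // MemFamily H m G} := by
  classical
  have hne : s(a, b) ≠ s(a, c) := by simp [hbc, hac.ne]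
  have hsub : {s(a, b), s(a, c)} ⊆ H.edgeFinset := by simp [insert_subset_iff, hab, hac]
  have hrest : ∏ e ∈ H.edgeFinset \ {s(a, b), s(a, c)},
      (#(edgesOver (splitHost a b c A) e)).choose m
        = (n * n).choose m ^ #(H.edgeFinset \ {s(a, b), s(a, c)}) := by
    refine prod_eq_pow_card ?_
    rintro ⟨i, j⟩ hij
    obtain ⟨hadj, hb, hc⟩ : H.Adj i j ∧ s(i, j) ≠ s(a, b) ∧ s(i, j) ≠ s(a, c) := by
      simpa using hij
    rw [card_edgesOver _ hadj.ne, pairCount_splitHost_of_ne hadj.ne hb hc]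
  rw [card_subgraphs_memFamily, card_memFamily, ← prod_sdiff hsub, hrest, prod_pair hne,
    card_edgesOver _ hab.ne, card_edgesOver _ hac.ne, pairCount_splitHost_left hab.ne hbc,
    pairCount_splitHost_right hac.ne hbc, ← card_sdiff_add_card_eq_card hsub, card_pair hne]
  ring

end SplitHost

lemma exists_sq_card_sub_card_compl_le_one (α : Type*) [Fintype α] [DecidableEq α] :
    ∃ A : Finset α, ((#A : ℤ) - #Aᶜ) ^ 2 ≤ 1 := by
  obtain ⟨A, -, hA⟩ := exists_subset_card_eq (s := (univ : Finset α)) (n := Fintype.card α / 2)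
    (Nat.div_le_self _ 2)
  refine ⟨A, ?_⟩
  rw [sq_le_one_iff_abs_le_one, abs_le, card_compl, hA]
  omega

lemma card_memFamily_le_nine_pow_mul_card_free {a b c : Fin k} {H : SimpleGraph (Fin k)}
    {m : ℕ} (hab : H.Adj a b) (hac : H.Adj a c) (hbc : b ≠ c) (hm : 4 * m ≤ n * n) :
    Nat.card {G : SimpleGraph (Fin k × Fin n) // MemFamily H m G}
      ≤ 9 ^ m * Nat.card {G : SimpleGraph (Fin k × Fin n) //
          MemFamily H m G ∧ ∀ f : Fin k → Fin n, ¬ IsCanonicalCopy H G f} := by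
  obtain ⟨A, hA⟩ := exists_sq_card_sub_card_compl_le_one (Fin n)
  have hsum : #A * n + #Aᶜ * n = n * n := by
    rw [← add_mul, card_add_card_compl, Fintype.card_fin]
  have hbal : (((#A * n : ℕ) : ℤ) - (#Aᶜ * n : ℕ)) ^ 2 ≤ (#A * n : ℕ) + (#Aᶜ * n : ℕ) := by
    rw [← Nat.cast_add, hsum]
    push_cast
    rw [← sub_mul, mul_pow, ← sq]
    exact mul_le_of_le_one_left (sq_nonneg _) hA
  have hbinom : (n * n).choose m ^ 2 ≤ 9 ^ m * ((#A * n).choose m * (#Aᶜ * n).choose m) := by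
    simpa only [hsum] using sq_choose_add_le_nine_pow_mul hbal (hm.trans_eq hsum.symm)
  have hpos : 0 < (n * n).choose m ^ 2 := pow_pos (Nat.choose_pos (by omega)) 2
  have hsplit : Nat.card {G : SimpleGraph (Fin k × Fin n) // MemFamily H m G} ≤ 9 ^ m *
      Nat.card {G : SimpleGraph (Fin k × Fin n) // G ≤ splitHost a b c A ∧ MemFamily H m G} := by
    refine Nat.le_of_mul_le_mul_left ?_ hpos
    rw [mul_left_comm, card_subgraphs_splitHost_memFamily hab hac hbc, ← mul_assoc]
    exact Nat.mul_le_mul_right _ hbinom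
  refine hsplit.trans (Nat.mul_le_mul_left _ (Nat.card_mono (Set.toFinite _) ?_))
  exact fun G hG ↦ ⟨hG.2, not_isCanonicalCopy_of_le_splitHost hG.1 hab hac⟩

lemma nine_pow_le_two_mul_exp_one_pow (m : ℕ) : (9 : ℝ) ^ m ≤ (2 * Real.exp 1) ^ (2 * m) := by
  have he : (3 : ℝ) ≤ 2 * Real.exp 1 := by linarith [Real.add_one_le_exp (1 : ℝ)]
  calc (9 : ℝ) ^ m = 3 ^ (2 * m) := by rw [pow_mul]; norm_num
    _ ≤ (2 * Real.exp 1) ^ (2 * m) := by gcongr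

theorem triangle_free_probability_general {H : SimpleGraph (Fin k)} {a b c : Fin k}
    (hab : H.Adj a b) (hac : H.Adj a c) (hbc : b ≠ c) (n m : ℕ)
    (hm : (m : ℝ) ≤ (n : ℝ) ^ 2 / 4) :
    ((9 : ℝ) ^ m)⁻¹ * (Nat.card {G : SimpleGraph (Fin k × Fin n) // MemFamily H m G} : ℝ)
      ≤ (Nat.card {G : SimpleGraph (Fin k × Fin n) //
          MemFamily H m G ∧ ∀ f : Fin k → Fin n, ¬ IsCanonicalCopy H G f} : ℝ) := by
  have hm' : 4 * m ≤ n * n := by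
    have : (4 * m : ℝ) ≤ n * n := by linarith
    exact_mod_cast this
  rw [inv_mul_le_iff₀ (by positivity)]
  exact_mod_cast card_memFamily_le_nine_pow_mul_card_free hab hac hbc hm'

/-- For every even `n` and `1 ≤ m ≤ n²/4`, the probability that `G_{n,m}^{K₃}` contains no
canonical triangle is at least `(2e)^(-2m)` (stated in counting form). -/
theorem triangle_free_probability (n m : ℕ) (hn : Even n) (hm : 1 ≤ m)
    (hm' : (m : ℝ) ≤ (n : ℝ) ^ 2 / 4) :
    ((2 * Real.exp 1) ^ (2 * m))⁻¹ *
        (Nat.card {G : SimpleGraph (Fin 3 × Fin n) //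
          MemFamily (⊤ : SimpleGraph (Fin 3)) m G} : ℝ)
      ≤ (Nat.card {G : SimpleGraph (Fin 3 × Fin n) //
          MemFamily (⊤ : SimpleGraph (Fin 3)) m G ∧
          ∀ f : Fin 3 → Fin n, ¬ IsCanonicalCopy (⊤ : SimpleGraph (Fin 3)) G f} : ℝ) := by
  refine le_trans ?_ (triangle_free_probability_general (a := 0) (b := 1) (c := 2)
    (by decide) (by decide) (by decide) n m hm')
  gcongr
  exact nine_pow_le_two_mul_exp_one_pow m
end

section
/- For every graph H and constants λ, β > 0 there exist C, ε, ξ, γ > 0 such that the following holds for every sufficiently large n and every m ≥ C·n^{2−1/m₂(H)}: all but at most β^m·C(n²,m)^{e(H)} graphs G ∈ G(H, n, m, ε, λ) have the property that for every set X ⊆ E(G) of size |X| ≤ ξm, the graph G∖X contains at least γ·n^{v(H)}·(m/n²)^{e(H)} canonical copies of H. (Here C(n²,m) denotes the binomial coefficient.) -/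
open Finset

variable {k n : ℕ}

/-!
Graphs are counted with weight `p ^ #G`, `p = m / n ^ 2`, and the exceptional graphs are shown to
have total weight at most `exp (-b p n ^ 2)` with `b` as large as desired. The set of sparse edges
of `H` is built up by induction: the other edges lie in a fixed dense background `D`, whose pairs
are lower-regular with respect to a function `δ`. If there are no sparse edges, this is the
embedding lemma for dense lower-regular graphs.

For the inductive step, single out a sparse edge `e` and expose a `p`-random graph on the other
sparse edges in `T` rounds, using a random colouring with `T` colours. Let `B` be the set of pairs
in `V_a × V_b` that do not yet extend to many copies of `H - e`. As long as `B` is lower-regular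
it can join the background, so the induction hypothesis yields many copies of `H` with `e` in `B`;
the deletion method and a second moment estimate, which is where the 2-density enters, spread
these copies over a positive proportion of all pairs, up to an exponentially unlikely failure. So
`B` shrinks by a constant factor of `n ^ 2` in most rounds and must lose lower-regularity after
boundedly many rounds. Being sparse on some large rectangle, the final `B` misses, outside an
exponentially small set of outcomes, a positive proportion of the edges of any sparse lower-regular
graph between `V_a` and `V_b`, and each missed edge extends to many copies.

Robustness costs only a factor `exp (p #V)`: the supersets of the copy-poor graphs have a total
weight larger by at most this factor, and lower-regularity survives the deletion of few edges.
A graph `H` without two adjacent edges may have 2-density below `1`, but then its copies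
can be counted directly.
-/

section SubsetWeight

variable {α : Type*} {V : Finset α} {p : ℝ} {P Q : Finset α → Prop}

open Classical in
/-- The total weight `∑ p ^ #G` of the sets `G ⊆ V` with the property `P`: up to the factor
`(1 + p) ^ #V`, the probability that a binomial random subset of `V` has `P`. -/
noncomputable def subsetWeight (p : ℝ) (V : Finset α) (P : Finset α → Prop) : ℝ :=
  ∑ G ∈ V.powerset with P G, p ^ #G

lemma subsetWeight_nonneg (hp : 0 ≤ p) : 0 ≤ subsetWeight p V P :=
  sum_nonneg fun _ _ => pow_nonneg hp _

lemma subsetWeight_eq_zero (h : ∀ G ⊆ V, ¬ P G) : subsetWeight p V P = 0 := by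
  classical
  rw [subsetWeight, filter_false_of_mem fun G hG => h G (mem_powerset.1 hG), sum_empty]

lemma subsetWeight_mono (hp : 0 ≤ p) (h : ∀ G ⊆ V, P G → Q G) :
    subsetWeight p V P ≤ subsetWeight p V Q := by
  classical
  refine sum_le_sum_of_subset_of_nonneg (fun G hG => ?_) fun _ _ _ => pow_nonneg hp _
  rw [mem_filter, mem_powerset] at hG ⊢
  exact ⟨hG.1, h G hG.1 hG.2⟩

lemma sum_powerset_prod_le_exp {f : α → ℝ} (hf : ∀ v ∈ V, 0 ≤ f v) :
    ∑ G ∈ V.powerset, ∏ v ∈ G, f v ≤ Real.exp (∑ v ∈ V, f v) := by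
  classical
  rw [← prod_one_add, Real.exp_sum]
  refine prod_le_prod (fun v hv => by linarith [hf v hv]) fun v _ => ?_
  linarith [Real.add_one_le_exp (f v)]

lemma subsetWeight_le_exp (hp : 0 ≤ p) : subsetWeight p V P ≤ Real.exp (p * #V) := by
  classical
  calc subsetWeight p V P ≤ ∑ G ∈ V.powerset, p ^ #G :=
        sum_le_sum_of_subset_of_nonneg (filter_subset _ _) fun _ _ _ => pow_nonneg hp _
    _ ≤ Real.exp (∑ _v ∈ V, p) := by
        simpa only [prod_const] using sum_powerset_prod_le_exp fun _ _ => hp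
    _ = Real.exp (p * #V) := by rw [sum_const, nsmul_eq_mul, mul_comm]

lemma card_mul_pow_le_subsetWeight {ι : Type*} [Finite ι] (hp : 0 ≤ p) {f : ι → Finset α} {t : ℕ}
    (hf : Function.Injective f) (hV : ∀ i, f i ⊆ V) (hcard : ∀ i, #(f i) = t)
    (hP : ∀ i, P (f i)) : Nat.card ι * p ^ t ≤ subsetWeight p V P := by
  classical
  have := Fintype.ofFinite ι
  calc Nat.card ι * p ^ t = ∑ i, p ^ #(f i) := by simp [hcard]
    _ = ∑ G ∈ univ.image f, p ^ #G := by rw [sum_image hf.injOn]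
    _ ≤ subsetWeight p V P := by
        refine sum_le_sum_of_subset_of_nonneg (fun G hG => ?_) fun _ _ _ => by positivity
        obtain ⟨i, -, rfl⟩ := mem_image.1 hG
        exact mem_filter.2 ⟨mem_powerset.2 (hV i), hP i⟩

lemma mul_subsetWeight_le_sum {ι : Type*} (hp : 0 ≤ p) (I : Finset ι) (R : ι → Finset α → Prop)
    [∀ i G, Decidable (R i G)] {c : ℝ} (h : ∀ G ⊆ V, P G → c ≤ #{i ∈ I | R i G}) :
    c * subsetWeight p V P ≤ ∑ i ∈ I, subsetWeight p V (R i) := by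
  classical
  calc c * subsetWeight p V P ≤ ∑ G ∈ V.powerset with P G, ∑ i ∈ I with R i G, p ^ #G := by
        rw [subsetWeight, mul_sum]
        refine sum_le_sum fun G hG => ?_
        rw [mem_filter, mem_powerset] at hG
        rw [sum_const, nsmul_eq_mul]
        exact mul_le_mul_of_nonneg_right (h G hG.1 hG.2) (pow_nonneg hp _)
    _ ≤ ∑ G ∈ V.powerset, ∑ i ∈ I with R i G, p ^ #G :=
        sum_le_sum_of_subset_of_nonneg (filter_subset _ _)
          fun _ _ _ => sum_nonneg fun _ _ => pow_nonneg hp _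
    _ = ∑ i ∈ I, subsetWeight p V (R i) := by
        simp only [subsetWeight]
        refine sum_comm' fun G i => ?_
        simp only [mem_filter]
        tauto

lemma subsetWeight_le_sum {ι : Type*} (hp : 0 ≤ p) (I : Finset ι) (R : ι → Finset α → Prop)
    (h : ∀ G ⊆ V, P G → ∃ i ∈ I, R i G) :
    subsetWeight p V P ≤ ∑ i ∈ I, subsetWeight p V (R i) := by
  classical
  rw [← one_mul (subsetWeight p V P)]
  refine mul_subsetWeight_le_sum hp I R fun G hG hPG => ?_
  obtain ⟨i, hi, hR⟩ := h G hG hPG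
  exact_mod_cast card_pos.2 ⟨i, mem_filter.2 ⟨hi, hR⟩⟩

lemma subsetWeight_or_le (hp : 0 ≤ p) :
    subsetWeight p V (fun G => P G ∨ Q G) ≤ subsetWeight p V P + subsetWeight p V Q := by
  refine (subsetWeight_le_sum hp univ (fun i : Bool => cond i P Q) fun G _ hG => ?_).trans ?_
  · exact hG.elim (fun h => ⟨true, mem_univ _, h⟩) fun h => ⟨false, mem_univ _, h⟩
  · simp

lemma subsetWeight_superset_le [DecidableEq α] (hp : 0 ≤ p) (S : Finset α) :
    subsetWeight p V (fun G => S ⊆ G ∧ Q (G \ S)) ≤ p ^ #S * subsetWeight p V Q := by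
  classical
  have hinj : Set.InjOn (· \ S) ({G ∈ V.powerset | S ⊆ G ∧ Q (G \ S)} : Finset (Finset α)) := by
    intro G hG G' hG' h
    simp only [coe_filter, Set.mem_ofPred_eq] at hG hG' h
    rw [← sdiff_union_of_subset hG.2.1, h, sdiff_union_of_subset hG'.2.1]
  calc subsetWeight p V (fun G => S ⊆ G ∧ Q (G \ S))
      = p ^ #S * ∑ G ∈ V.powerset with S ⊆ G ∧ Q (G \ S), p ^ #(G \ S) := by
        rw [mul_sum]
        refine sum_congr (by congr) fun G hG => ?_
        rw [← pow_add, add_comm, card_sdiff_add_card_eq_card (mem_filter.1 hG).2.1]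
    _ = p ^ #S * ∑ X ∈ image (· \ S) {G ∈ V.powerset | S ⊆ G ∧ Q (G \ S)}, p ^ #X := by
        rw [sum_image hinj]
    _ ≤ p ^ #S * subsetWeight p V Q := by
        refine mul_le_mul_of_nonneg_left (sum_le_sum_of_subset_of_nonneg ?_ ?_) (pow_nonneg hp _)
        · simp only [subset_iff, mem_image, mem_filter, mem_powerset]
          rintro _ ⟨G, ⟨hG, -, hQ⟩, rfl⟩
          exact ⟨fun x hx => hG (sdiff_subset hx), hQ⟩
        · exact fun _ _ _ => pow_nonneg hp _

lemma subsetWeight_exists_subset_le (hp : 0 ≤ p) :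
    subsetWeight p V (fun G => ∃ G' ⊆ G, P G') ≤ Real.exp (p * #V) * subsetWeight p V P := by
  classical
  calc subsetWeight p V (fun G => ∃ G' ⊆ G, P G')
      ≤ ∑ S ∈ V.powerset with P S, subsetWeight p V (fun G => S ⊆ G ∧ True) := by
        refine subsetWeight_le_sum hp _ _ fun G hG ⟨S, hSG, hS⟩ => ⟨S, ?_, hSG, trivial⟩
        exact mem_filter.2 ⟨mem_powerset.2 (hSG.trans hG), hS⟩
    _ ≤ ∑ S ∈ V.powerset with P S, p ^ #S * Real.exp (p * #V) :=
        sum_le_sum fun S _ => (subsetWeight_superset_le (Q := fun _ => True) hp S).trans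
          (mul_le_mul_of_nonneg_left (subsetWeight_le_exp hp) (pow_nonneg hp _))
    _ = Real.exp (p * #V) * subsetWeight p V P := by
        rw [← sum_mul, mul_comm, subsetWeight]

variable [DecidableEq α]

/-- `G` is deletion-resistant if more than `t` of the sets `S i` survive the removal of any
at most `z` elements. This is the exceptional event of the Rödl–Ruciński deletion method. -/
def DeletionResistant {ι : Type*} (I : Finset ι) (S : ι → Finset α) (t : ℝ) (z : ℕ)
    (G : Finset α) : Prop :=
  ∀ G' ⊆ G, #(G \ G') ≤ z → t < #{i ∈ I | S i ⊆ G'}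

lemma DeletionResistant.sdiff {ι : Type*} {I : Finset ι} {S : ι → Finset α} {t : ℝ} {z r : ℕ}
    {G T : Finset α} (h : DeletionResistant I S t (z + r) G) (hT : #T ≤ r) :
    DeletionResistant I S t z (G \ T) := by
  intro G' hG' hcard
  refine h G' (hG'.trans sdiff_subset) ?_
  have hsub : G \ G' ⊆ ((G \ T) \ G') ∪ T := by
    intro x hx
    simp only [mem_sdiff, mem_union] at hx ⊢
    tauto
  have := (card_le_card hsub).trans (card_union_le _ _)
  omega

theorem subsetWeight_deletionResistant_le {ι : Type*} (hp : 0 ≤ p) (I : Finset ι)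
    (S : ι → Finset α) {r : ℕ} (hr : ∀ i ∈ I, #(S i) ≤ r) {M K : ℝ} (hM : 0 < M) (hK : 0 < K)
    (hS : ∑ i ∈ I, p ^ #(S i) ≤ M) (z : ℕ) :
    subsetWeight p V (DeletionResistant I S (K * M) (r * z)) ≤ K⁻¹ ^ z * Real.exp (p * #V) := by
  classical
  induction z with
  | zero => simpa using subsetWeight_le_exp hp
  | succ z ih =>
    have hMarkov : M * (K * subsetWeight p V (DeletionResistant I S (K * M) (r * (z + 1)))) ≤
        M * (K⁻¹ ^ z * Real.exp (p * #V)) := by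
      calc M * (K * subsetWeight p V (DeletionResistant I S (K * M) (r * (z + 1))))
          = K * M * subsetWeight p V (DeletionResistant I S (K * M) (r * (z + 1))) := by ring
        _ ≤ ∑ i ∈ I, subsetWeight p V
              (fun G => S i ⊆ G ∧ DeletionResistant I S (K * M) (r * z) (G \ S i)) := by
            refine mul_subsetWeight_le_sum hp I _ fun G _ hG => ?_
            refine (hG G Subset.rfl (by simp)).le.trans (Nat.cast_le.2 (card_le_card ?_))
            intro i hi
            rw [mem_filter] at hi ⊢
            exact ⟨hi.1, hi.2, hG.sdiff (hr i hi.1)⟩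
        _ ≤ ∑ i ∈ I, p ^ #(S i) * (K⁻¹ ^ z * Real.exp (p * #V)) :=
            sum_le_sum fun i _ => (subsetWeight_superset_le hp (S i)).trans
              (mul_le_mul_of_nonneg_left ih (pow_nonneg hp _))
        _ ≤ M * (K⁻¹ ^ z * Real.exp (p * #V)) := by
            rw [← sum_mul]
            exact mul_le_mul_of_nonneg_right hS (by positivity)
    rw [pow_succ, mul_right_comm, ← div_eq_mul_inv, le_div_iff₀ hK, mul_comm]
    exact le_of_mul_le_mul_left hMarkov hM

lemma card_inter_chernoff {F : Finset α} {L s : ℝ} (hL : 1 ≤ L) (G : Finset α)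
    (hG : s ≤ #(G ∩ F)) : 1 ≤ Real.exp (-(s * Real.log L)) * ∏ v ∈ G, if v ∈ F then L else 1 := by
  have hpow : ∏ v ∈ G, (if v ∈ F then L else 1) = Real.exp (#(G ∩ F) * Real.log L) := by
    rw [prod_ite, prod_const_one, mul_one, prod_const, filter_mem_eq_inter, Real.exp_nat_mul,
      Real.exp_log (by linarith)]
  rw [hpow, ← Real.exp_add]
  apply Real.one_le_exp
  linarith [mul_le_mul_of_nonneg_right hG (Real.log_nonneg hL)]

theorem subsetWeight_le_card_inter_le (hp : 0 ≤ p) (F : Finset α) {L : ℝ} (hL : 1 ≤ L) (s : ℝ) :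
    subsetWeight p V (fun G => s ≤ #(G ∩ F)) ≤
      Real.exp (p * #V + p * L * #F - s * Real.log L) := by
  set f : α → ℝ := fun v => p * if v ∈ F then L else 1
  have hf : ∀ v, 0 ≤ f v := fun v => by
    simp only [f]
    split_ifs <;> positivity
  have hsum : ∑ v ∈ V, f v ≤ p * #V + p * L * #F := by
    calc ∑ v ∈ V, f v ≤ ∑ v ∈ V, (p + if v ∈ F then p * L else 0) := by
          refine sum_le_sum fun v _ => ?_
          simp only [f]
          split_ifs <;> nlinarith
      _ = p * #V + p * L * #(V ∩ F) := by
          rw [sum_add_distrib, sum_const, sum_ite_mem, sum_const, nsmul_eq_mul, nsmul_eq_mul]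
          ring
      _ ≤ p * #V + p * L * #F := by
          gcongr
          exact inter_subset_right
  classical
  calc subsetWeight p V (fun G => s ≤ #(G ∩ F))
      ≤ ∑ G ∈ V.powerset with s ≤ #(G ∩ F), Real.exp (-(s * Real.log L)) * ∏ v ∈ G, f v := by
        rw [subsetWeight]
        refine sum_le_sum fun G hG => ?_
        rw [prod_mul_distrib, prod_const, mul_left_comm]
        exact le_mul_of_one_le_right (pow_nonneg hp _)
          (card_inter_chernoff hL G (mem_filter.1 hG).2)
    _ ≤ Real.exp (-(s * Real.log L)) * ∑ G ∈ V.powerset, ∏ v ∈ G, f v := by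
        rw [← mul_sum]
        refine mul_le_mul_of_nonneg_left ?_ (Real.exp_pos _).le
        exact sum_le_sum_of_subset_of_nonneg (filter_subset _ _)
          fun _ _ _ => prod_nonneg fun v _ => hf v
    _ ≤ Real.exp (-(s * Real.log L)) * Real.exp (∑ v ∈ V, f v) :=
        mul_le_mul_of_nonneg_left (sum_powerset_prod_le_exp fun v _ => hf v) (Real.exp_pos _).le
    _ ≤ Real.exp (p * #V + p * L * #F - s * Real.log L) := by
        rw [← Real.exp_add, Real.exp_le_exp]
        linarith

end SubsetWeight

section Colouring

variable {α : Type*} {G F : Finset α} {T : ℕ}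

/-- The elements of `G` which get the colour `i` in the colouring `h` of `G`. -/
def colourClass (h : G → Fin T) (i : Fin T) : Finset α :=
  (univ.filter (h · = i)).map (Function.Embedding.subtype _)

lemma mem_colourClass {h : G → Fin T} {i : Fin T} {v : α} :
    v ∈ colourClass h i ↔ ∃ hv : v ∈ G, h ⟨v, hv⟩ = i := by
  simp [colourClass]

lemma prod_pow_card_colourClass (h : G → Fin T) (p : ℝ) :
    ∏ i, p ^ #(colourClass h i) = p ^ #G := by
  have hsum : ∑ i, #(colourClass h i) = #G := by
    simp only [colourClass, card_map]
    rw [← card_eq_sum_card_fiberwise fun _ _ => mem_univ _, card_univ, Fintype.card_coe]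
  rw [prod_pow_eq_pow_sum, hsum]

lemma colourClass_injective :
    Function.Injective (colourClass : (G → Fin T) → Fin T → Finset α) := by
  intro h h' hh
  funext v
  have hv : v.1 ∈ colourClass h' (h v) := hh ▸ mem_colourClass.2 ⟨v.2, rfl⟩
  exact (mem_colourClass.1 hv).2.symm

variable [DecidableEq α]

lemma biUnion_colourClass (h : G → Fin T) : univ.biUnion (colourClass h) = G := by
  ext v
  simp [mem_colourClass]

lemma sum_half_pow_card_inter_colourClass (hF : F ⊆ G) (i : Fin T) :
    ∑ h : G → Fin T, (1 / 2 : ℝ) ^ #(F ∩ colourClass h i) =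
      (T : ℝ) ^ #G * (1 - 1 / (2 * T)) ^ #F := by
  have hT : (T : ℝ) ≠ 0 := Nat.cast_ne_zero.2 (Fin.pos i).ne'
  have hfactor : ∀ h : G → Fin T, (1 / 2 : ℝ) ^ #(F ∩ colourClass h i) =
      ∏ v : G, if v.1 ∈ F ∧ h v = i then 1 / 2 else 1 := by
    intro h
    rw [prod_ite, prod_const_one, mul_one, prod_const]
    congr 1
    rw [← card_map (Function.Embedding.subtype _)]
    congr 1
    ext v
    simp only [mem_inter, mem_colourClass, mem_map, mem_filter, mem_univ, true_and,
      Function.Embedding.subtype_apply, Subtype.exists, exists_and_right, exists_eq_right]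
    constructor
    · rintro ⟨hv, hG, hi⟩
      exact ⟨hG, hv, hi⟩
    · rintro ⟨hG, hv, hi⟩
      exact ⟨hv, hG, hi⟩
  have hlocal : ∀ v : G, (∑ c : Fin T, if v.1 ∈ F ∧ c = i then (1 / 2 : ℝ) else 1) =
      T * if v.1 ∈ F then 1 - 1 / (2 * T : ℝ) else 1 := by
    intro v
    by_cases hv : v.1 ∈ F
    · simp only [hv, true_and, if_true]
      rw [Fintype.sum_eq_add_sum_compl i, if_pos rfl,
        sum_congr rfl fun c hc => if_neg (by simpa using hc)]
      simp [card_compl, Nat.cast_sub (Fin.pos i)]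
      field_simp
      ring
    · simp [hv]
  simp only [hfactor]
  rw [← Fintype.prod_sum fun (v : G) (c : Fin T) => if v.1 ∈ F ∧ c = i then (1 / 2 : ℝ) else 1]
  simp only [hlocal]
  rw [prod_mul_distrib, prod_const, card_univ, Fintype.card_coe,
    prod_coe_sort G fun v => if v ∈ F then 1 - 1 / (2 * T : ℝ) else 1, prod_ite, prod_const_one,
    mul_one, prod_const, filter_mem_eq_inter, inter_eq_right.2 hF]

lemma card_colouring_small_class_le (hF : F ⊆ G) (i : Fin T) :
    (#{h : G → Fin T | (#(F ∩ colourClass h i) : ℝ) < #F / (4 * T)} : ℝ) ≤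
      (T : ℝ) ^ #G * Real.exp (-(#F / (4 * T))) := by
  have hT : (1 : ℝ) ≤ T := Nat.one_le_cast.2 (Fin.pos i)
  have hexp : Real.exp (-1) ≤ 1 / 2 := by
    rw [Real.exp_neg, one_div]
    exact inv_anti₀ (by norm_num) (by linarith [Real.add_one_le_exp (1 : ℝ)])
  have hMarkov : (#{h : G → Fin T | (#(F ∩ colourClass h i) : ℝ) < #F / (4 * T)} : ℝ) *
      Real.exp (-(#F / (4 * T))) ≤ (T : ℝ) ^ #G * (1 - 1 / (2 * T)) ^ #F := by
    rw [← sum_half_pow_card_inter_colourClass hF i, ← nsmul_eq_mul, ← sum_const]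
    refine (sum_le_sum fun h hh => ?_).trans
      (sum_le_sum_of_subset_of_nonneg (filter_subset _ _) fun _ _ _ => by positivity)
    calc Real.exp (-(#F / (4 * T))) ≤ Real.exp (#(F ∩ colourClass h i) * (-1)) := by
          rw [Real.exp_le_exp]
          linarith [(mem_filter.1 hh).2]
      _ = Real.exp (-1) ^ #(F ∩ colourClass h i) := Real.exp_nat_mul _ _
      _ ≤ (1 / 2) ^ #(F ∩ colourClass h i) := by gcongr
  have hbase : (1 - 1 / (2 * T : ℝ)) ^ #F ≤
      Real.exp (-(#F / (4 * T))) * Real.exp (-(#F / (4 * T))) := by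
    have hle : 1 / (2 * T : ℝ) ≤ 1 := (div_le_one (by positivity)).2 (by linarith)
    calc (1 - 1 / (2 * T : ℝ)) ^ #F ≤ Real.exp (-(1 / (2 * T : ℝ))) ^ #F :=
          pow_le_pow_left₀ (by linarith) (Real.one_sub_le_exp_neg _) _
      _ = _ := by
          rw [← Real.exp_nat_mul, ← Real.exp_add]
          congr 1
          field_simp
          ring
  refine le_of_mul_le_mul_right (hMarkov.trans ?_) (Real.exp_pos (-(#F / (4 * T) : ℝ)))
  rw [mul_assoc]
  gcongr

open Classical in
/-- Randomly colouring a weight-`T * p` random set with `T` colours yields independent weight-`p`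
random sets, so a property `Q` shared by the colour classes of half of all colourings may be
assumed of those sets. -/
theorem sum_mul_pow_card_le_of_colouring {V : Finset α} {p : ℝ} (hp : 0 ≤ p)
    {Φ : Finset α → ℝ} (hΦ : ∀ G, 0 ≤ Φ G) {Q : Finset α → Prop}
    (hQ : ∀ G ⊆ V, Φ G ≠ 0 → (T : ℝ) ^ #G ≤ 2 * #{h : G → Fin T | ∀ i, Q (colourClass h i)}) :
    ∑ G ∈ V.powerset, (T * p) ^ #G * Φ G ≤
      2 * ∑ g ∈ Fintype.piFinset fun _ : Fin T => {G ∈ V.powerset | Q G},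
        (∏ i, p ^ #(g i)) * Φ (univ.biUnion g) := by
  set X := Fintype.piFinset fun _ : Fin T => {G ∈ V.powerset | Q G}
  have hmaps : ∀ g ∈ X, univ.biUnion g ∈ V.powerset := fun g hg => mem_powerset.2 <|
    biUnion_subset.2 fun i _ => mem_powerset.1 (mem_filter.1 (Fintype.mem_piFinset.1 hg i)).1
  rw [← sum_fiberwise_of_maps_to hmaps, mul_sum]
  refine sum_le_sum fun G hG => ?_
  rcases eq_or_ne (Φ G) 0 with h0 | h0
  · rw [h0, mul_zero]
    exact mul_nonneg zero_le_two (sum_nonneg fun g _ =>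
      mul_nonneg (prod_nonneg fun _ _ => pow_nonneg hp _) (hΦ _))
  set S : Finset (G → Fin T) := {h : G → Fin T | ∀ i, Q (colourClass h i)}
  calc (T * p) ^ #G * Φ G ≤ 2 * #S * p ^ #G * Φ G := by
        rw [mul_pow]
        have := hΦ G
        gcongr
        exact hQ G (mem_powerset.1 hG) h0
    _ = 2 * ∑ g ∈ S.image colourClass, (∏ i, p ^ #(g i)) * Φ (univ.biUnion g) := by
        rw [sum_image colourClass_injective.injOn]
        simp only [prod_pow_card_colourClass, biUnion_colourClass, sum_const, nsmul_eq_mul]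
        ring
    _ ≤ _ := by
        refine mul_le_mul_of_nonneg_left (sum_le_sum_of_subset_of_nonneg (fun g hg => ?_)
          fun _ _ _ => mul_nonneg (prod_nonneg fun _ _ => pow_nonneg hp _) (hΦ _)) zero_le_two
        obtain ⟨h, hh, rfl⟩ := mem_image.1 hg
        refine mem_filter.2 ⟨Fintype.mem_piFinset.2 fun i => mem_filter.2 ⟨?_,
          (mem_filter.1 hh).2 i⟩, biUnion_colourClass h⟩
        exact mem_powerset.2 fun v hv => mem_powerset.1 hG (mem_colourClass.1 hv).1

end Colouring

section LowerRegular

/-- The bipartite graph `B ⊆ Fin n × Fin n` is lower-regular with respect to the function `δ`: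
for `x ≥ ε`, any two sets of relative size at least `x` span at least the density `δ x`. -/
def LowerRegular (ε : ℝ) (δ : ℝ → ℝ) (B : Finset (Fin n × Fin n)) : Prop :=
  ∀ x, ε ≤ x → ∀ A A' : Finset (Fin n), x * n ≤ #A → x * n ≤ #A' →
    δ x * (#A * #A') ≤ #(B ∩ A ×ˢ A')

variable {ε ε' c : ℝ} {δ δ' : ℝ → ℝ} {B B' : Finset (Fin n × Fin n)}

lemma LowerRegular.mono_eps (h : LowerRegular ε δ B) (hε : ε ≤ ε') : LowerRegular ε' δ B :=
  fun x hx => h x (hε.trans hx)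

lemma LowerRegular.mono (h : LowerRegular ε δ B) (hB : B ⊆ B') : LowerRegular ε δ B' :=
  fun x hx A A' hA hA' => (h x hx A A' hA hA').trans
    (Nat.cast_le.2 (card_le_card (inter_subset_inter_right hB)))

lemma LowerRegular.mono_density (h : LowerRegular ε δ B) (hδ : ∀ x, δ' x ≤ δ x) :
    LowerRegular ε δ' B := fun x hx A A' hA hA' =>
  (mul_le_mul_of_nonneg_right (hδ x) (by positivity)).trans (h x hx A A' hA hA')

lemma LowerRegular.map_swap (h : LowerRegular ε δ B) :
    LowerRegular ε δ (B.map (Equiv.prodComm _ _).toEmbedding) := by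
  intro x hx A A' hA hA'
  have hcard : #(B.map (Equiv.prodComm _ _).toEmbedding ∩ A ×ˢ A') = #(B ∩ A' ×ˢ A) := by
    rw [← map_swap_product]
    exact (congrArg card (map_inter _ _).symm).trans (card_map _)
  rw [mul_comm (#A : ℝ), hcard]
  exact h x hx A' A hA' hA

lemma LowerRegular.card_sdiff_le (h : LowerRegular ε (fun _ => 2 * c) B) (hc : 0 ≤ c) (hε : 0 ≤ ε)
    (hB : (#(B \ B') : ℝ) ≤ c * ε ^ 2 * n ^ 2) : LowerRegular ε (fun _ => c) B' := by
  intro x hx A A' hA hA'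
  have hcard : (#(B ∩ A ×ˢ A') : ℝ) ≤ #(B' ∩ A ×ˢ A') + #(B \ B') := by
    rw [← Nat.cast_add, Nat.cast_le]
    refine (card_le_card fun uv => ?_).trans (card_union_le _ _)
    simp only [mem_inter, mem_union, mem_sdiff]
    tauto
  have hx : ε * n ≤ x * n := by gcongr
  have hprod : (ε * n) * (ε * n) ≤ #A * #A' :=
    mul_le_mul (hx.trans hA) (hx.trans hA') (by positivity) (by positivity)
  nlinarith [h x ‹_› A A' hA hA', mul_le_mul_of_nonneg_left hprod hc]

lemma LowerRegular.card_low_degree_le {x : ℝ} (h : LowerRegular ε δ B) (hx : ε ≤ x) (hx0 : 0 ≤ x)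
    {A : Finset (Fin n)} (hA : x * n ≤ #A) :
    (#{u | (#{w ∈ A | (u, w) ∈ B} : ℝ) < δ x * #A} : ℝ) ≤ x * n := by
  by_contra! hlarge
  set U : Finset (Fin n) := {u | (#{w ∈ A | (u, w) ∈ B} : ℝ) < δ x * #A}
  have hne : U.Nonempty := by
    rw [← card_pos, ← Nat.cast_pos (α := ℝ)]
    exact lt_of_le_of_lt (by positivity) hlarge
  have hcount : #(B ∩ U ×ˢ A) = ∑ u ∈ U, #{w ∈ A | (u, w) ∈ B} := by
    rw [inter_comm, ← filter_mem_eq_inter]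
    simp only [card_filter, sum_product]
  have hlt : ∑ u ∈ U, (#{w ∈ A | (u, w) ∈ B} : ℝ) < ∑ _u ∈ U, δ x * #A :=
    sum_lt_sum_of_nonempty hne fun u hu => (mem_filter.1 hu).2
  have hge := h x hx U A hlarge.le hA
  rw [hcount, Nat.cast_sum] at hge
  rw [sum_const, nsmul_eq_mul] at hlt
  linarith [mul_left_comm (δ x) (#U : ℝ) (#A : ℝ)]

end LowerRegular

section Embedding

/-- A potential edge between the parts `V_i` and `V_j` of the blow-up: the slot `((i, j), (u, w))`
stands for the edge between the vertex `u` of `V_i` and the vertex `w` of `V_j`. -/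
abbrev Slot (k n : ℕ) := (Fin k × Fin k) × (Fin n × Fin n)

/-- The bipartite graph which the set `G` of slots induces on the pair `e` of parts. -/
def pairGraph (G : Finset (Slot k n)) (e : Fin k × Fin k) : Finset (Fin n × Fin n) :=
  {uv | (e, uv) ∈ G}

lemma mem_pairGraph {G : Finset (Slot k n)} {e : Fin k × Fin k} {uv : Fin n × Fin n} :
    uv ∈ pairGraph G e ↔ (e, uv) ∈ G := by
  simp [pairGraph]

/-- The slots used by the canonical copy `f` of the graph with edge set `E`. -/
def copySlots (E : Finset (Fin k × Fin k)) (f : Fin k → Fin n) : Finset (Slot k n) :=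
  E.image fun e => (e, Prod.map f f e)

lemma card_copySlots (E : Finset (Fin k × Fin k)) (f : Fin k → Fin n) : #(copySlots E f) = #E :=
  card_image_of_injective _ fun _ _ h => (Prod.mk.inj h).1

/-- The canonical copies of the graph with edge set `E` all of whose edges lie in `D`. -/
def copies (E : Finset (Fin k × Fin k)) (D : Finset (Slot k n)) : Finset (Fin k → Fin n) :=
  {f | copySlots E f ⊆ D}

variable {E : Finset (Fin k × Fin k)} {D D' : Finset (Slot k n)} {f : Fin k → Fin n}

lemma mem_copies : f ∈ copies E D ↔ ∀ e ∈ E, (e, Prod.map f f e) ∈ D := by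
  simp only [copies, copySlots, mem_filter, mem_univ, true_and, image_subset_iff]

lemma copies_mono (h : D ⊆ D') : copies E D ⊆ copies E D' :=
  fun _ hf => mem_copies.2 fun e he => h (mem_copies.1 hf e he)

/-- The canonical copies `f` of the graph which `E` induces on `S`, with edges in `D` and with
`f i ∈ A i` for `i ∈ S`; outside `S` the map `f` is arbitrary. -/
def partialCopies (E : Finset (Fin k × Fin k)) (D : Finset (Slot k n)) (S : Finset (Fin k))
    (A : Fin k → Finset (Fin n)) : Finset (Fin k → Fin n) :=
  {f ∈ copies {e ∈ E | e.1 ∈ S ∧ e.2 ∈ S} D | ∀ i ∈ S, f i ∈ A i}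

lemma mem_partialCopies {S : Finset (Fin k)} {A : Fin k → Finset (Fin n)} :
    f ∈ partialCopies E D S A ↔
      (∀ e ∈ E, e.1 ∈ S → e.2 ∈ S → (e, Prod.map f f e) ∈ D) ∧ ∀ i ∈ S, f i ∈ A i := by
  simp only [partialCopies, mem_filter, mem_copies, and_imp]

/-- The vertices of `A j` which can still play the role of `j` once `v` is mapped to `u`. -/
def candidates (E : Finset (Fin k × Fin k)) (D : Finset (Slot k n)) (v : Fin k) (u : Fin n)
    (A : Fin k → Finset (Fin n)) (j : Fin k) : Finset (Fin n) :=
  {w ∈ A j | ((v, j) ∈ E → ((v, j), (u, w)) ∈ D) ∧ ((j, v) ∈ E → ((j, v), (w, u)) ∈ D)}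

lemma card_few_candidates_le (hE : ∀ e ∈ E, e.1 < e.2) {δ : ℝ → ℝ} {x c : ℝ} (hx : 0 ≤ x)
    (hc : c ≤ δ x) (hc1 : c ≤ 1) (hD : ∀ e ∈ E, LowerRegular x δ (pairGraph D e)) (v j : Fin k)
    {A : Fin k → Finset (Fin n)} (hA : x * n ≤ #(A j)) :
    (#{u | (#(candidates E D v u A j) : ℝ) < c * #(A j)} : ℝ) ≤ x * n := by
  have hmono : ∀ N : Fin n → Finset (Fin n), (∀ u, N u ⊆ candidates E D v u A j) →
      (#{u | (#(candidates E D v u A j) : ℝ) < c * #(A j)} : ℝ) ≤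
        #{u | (#(N u) : ℝ) < δ x * #(A j)} := by
    refine fun N hN => Nat.cast_le.2 (card_le_card (monotone_filter_right _ fun u _ hu => ?_))
    calc (#(N u) : ℝ) ≤ #(candidates E D v u A j) := Nat.cast_le.2 (card_le_card (hN u))
      _ < c * #(A j) := hu
      _ ≤ δ x * #(A j) := by gcongr
  by_cases hvj : (v, j) ∈ E
  · refine (hmono _ fun u w hw => ?_).trans ((hD _ hvj).card_low_degree_le le_rfl hx hA)
    rw [mem_filter, mem_pairGraph] at hw
    exact mem_filter.2 ⟨hw.1, fun _ => hw.2, fun hjv => absurd (hE _ hjv) (hE _ hvj).not_gt⟩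
  by_cases hjv : (j, v) ∈ E
  · refine (hmono _ fun u w hw => ?_).trans
      ((hD _ hjv).map_swap.card_low_degree_le le_rfl hx hA)
    simp only [mem_filter, mem_map_equiv] at hw
    exact mem_filter.2 ⟨hw.1, fun h => absurd h hvj, fun _ => mem_pairGraph.1 hw.2⟩
  · have hcand : ∀ u, candidates E D v u A j = A j := fun u =>
      filter_true_of_mem fun w _ => ⟨fun h => absurd h hvj, fun h => absurd h hjv⟩
    have hnone : ∀ u, ¬ (#(candidates E D v u A j) : ℝ) < c * #(A j) := fun u => by
      rw [hcand, not_lt]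
      exact mul_le_of_le_one_left (by positivity) hc1
    rw [filter_false_of_mem fun u _ => hnone u, card_empty, Nat.cast_zero]
    positivity

lemma update_mem_partialCopies (hE : ∀ e ∈ E, e.1 < e.2) {S : Finset (Fin k)} {v : Fin k}
    (hv : v ∉ S) {A : Fin k → Finset (Fin n)} {u : Fin n} (hu : u ∈ A v)
    (hf : f ∈ partialCopies E D S (candidates E D v u A)) :
    Function.update f v u ∈ partialCopies E D (insert v S) A := by
  obtain ⟨hD, hA⟩ := mem_partialCopies.1 hf
  have hne : ∀ i ∈ S, i ≠ v := fun i hi h => hv (h ▸ hi)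
  refine mem_partialCopies.2 ⟨fun ⟨i, j⟩ he hi hj => ?_, fun i hi => ?_⟩
  · change i ∈ _ at hi
    change j ∈ _ at hj
    rcases mem_insert.1 hi with rfl | hiS <;> rcases mem_insert.1 hj with rfl | hjS
    · exact absurd (hE _ he) (lt_irrefl _)
    · simpa [hne j hjS] using (mem_filter.1 (hA j hjS)).2.1 he
    · simpa [hne i hiS] using (mem_filter.1 (hA i hiS)).2.2 he
    · simpa [hne i hiS, hne j hjS] using hD _ he hiS hjS
  · rcases mem_insert.1 hi with rfl | hiS
    · rwa [Function.update_self]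
    · rw [Function.update_of_ne (hne i hiS)]
      exact (mem_filter.1 (hA i hiS)).1

lemma sum_card_partialCopies_le (hE : ∀ e ∈ E, e.1 < e.2) {S : Finset (Fin k)} {v : Fin k}
    (hv : v ∉ S) {A : Fin k → Finset (Fin n)} {U : Finset (Fin n)} (hU : U ⊆ A v) :
    ∑ u ∈ U, #(partialCopies E D S (candidates E D v u A)) ≤
      n * #(partialCopies E D (insert v S) A) := by
  have hcard : #((univ : Finset (Fin n)) ×ˢ partialCopies E D (insert v S) A) =
      n * #(partialCopies E D (insert v S) A) := by
    rw [card_product, card_univ, Fintype.card_fin]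
  rw [← card_sigma, ← hcard]
  refine card_le_card_of_injOn (fun x => (x.2 v, Function.update x.2 v x.1)) ?_ ?_
  · rintro ⟨u, f⟩ hx
    rw [mem_coe, mem_sigma] at hx
    exact mem_product.2 ⟨mem_univ _, update_mem_partialCopies hE hv (hU hx.1) hx.2⟩
  · rintro ⟨u, f⟩ - ⟨u', f'⟩ - h
    obtain ⟨hfv, hupd⟩ : f v = f' v ∧ Function.update f v u = Function.update f' v u' :=
      Prod.mk.inj h
    have hu : u = u' := by simpa using congrFun hupd v
    have hf : f = f' := by
      rw [← Function.update_eq_self v f, ← Function.update_eq_self v f', hfv]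
      simpa using congrArg (fun g => Function.update g v (f' v)) hupd
    rw [hu, hf]

lemma half_le_card_many_candidates (hE : ∀ e ∈ E, e.1 < e.2) {δ : ℝ → ℝ} {x c : ℝ} (hx : 0 ≤ x)
    (hc : c ≤ δ (x / (2 * (k + 1)))) (hc1 : c ≤ 1)
    (hD : ∀ e ∈ E, LowerRegular (x / (2 * (k + 1))) δ (pairGraph D e)) {S : Finset (Fin k)}
    {v : Fin k} {A : Fin k → Finset (Fin n)} (hA : ∀ i ∈ insert v S, x * n ≤ #(A i)) :
    x / 2 * n ≤ #{u ∈ A v | ∀ j ∈ S, c * #(A j) ≤ #(candidates E D v u A j)} := by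
  set y := x / (2 * (k + 1)) with hy
  have hyx : y ≤ x := div_le_self hx (by linarith [(Nat.cast_nonneg k : (0 : ℝ) ≤ k)])
  have hky : k * y ≤ x / 2 := by
    rw [hy, mul_div_assoc', div_le_div_iff₀ (by positivity) two_pos]
    nlinarith
  set few : Fin k → Finset (Fin n) := fun j => {u | (#(candidates E D v u A j) : ℝ) < c * #(A j)}
  have hfew : (#(S.biUnion few) : ℝ) ≤ x / 2 * n := by
    calc (#(S.biUnion few) : ℝ) ≤ ∑ j ∈ S, (#(few j) : ℝ) := by exact_mod_cast card_biUnion_le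
      _ ≤ ∑ _j ∈ S, y * n := sum_le_sum fun j hj =>
          card_few_candidates_le hE (by positivity) hc hc1 hD v j
            ((mul_le_mul_of_nonneg_right hyx n.cast_nonneg).trans (hA j (mem_insert_of_mem hj)))
      _ ≤ k * (y * n) := by
          rw [sum_const, nsmul_eq_mul]
          gcongr
          simpa using card_le_univ S
      _ ≤ x / 2 * n := by rw [← mul_assoc]; gcongr
  have hsub : A v ⊆
      {u ∈ A v | ∀ j ∈ S, c * #(A j) ≤ #(candidates E D v u A j)} ∪ S.biUnion few := by
    intro u hu
    by_cases hgood : ∀ j ∈ S, c * #(A j) ≤ #(candidates E D v u A j)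
    · exact mem_union_left _ (mem_filter.2 ⟨hu, hgood⟩)
    · push Not at hgood
      obtain ⟨j, hj, hlt⟩ := hgood
      exact mem_union_right _ (mem_biUnion.2 ⟨j, hj, mem_filter.2 ⟨mem_univ _, hlt⟩⟩)
  have hcard : (#(A v) : ℝ) ≤
      #{u ∈ A v | ∀ j ∈ S, c * #(A j) ≤ #(candidates E D v u A j)} + #(S.biUnion few) := by
    exact_mod_cast (card_le_card hsub).trans (card_union_le _ _)
  linarith [hA v (mem_insert_self v S)]

theorem exists_le_card_partialCopies (δ : ℝ → ℝ) (hδ : ∀ x, 0 < x → 0 < δ x)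
    (E : Finset (Fin k × Fin k)) (hE : ∀ e ∈ E, e.1 < e.2) (S : Finset (Fin k)) (x : ℝ)
    (hx : 0 < x) : ∃ ε γ : ℝ, 0 < ε ∧ 0 < γ ∧ ∀ n : ℕ, 0 < n → ∀ D : Finset (Slot k n),
      (∀ e ∈ E, LowerRegular ε δ (pairGraph D e)) → ∀ A : Fin k → Finset (Fin n),
      (∀ i ∈ S, x * n ≤ #(A i)) → γ * n ^ k ≤ #(partialCopies E D S A) := by
  induction S using Finset.induction_on generalizing x with
  | empty =>
    refine ⟨1, 1, one_pos, one_pos, fun n _ D _ A _ => ?_⟩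
    simp [partialCopies, copies, copySlots]
  | insert v S hv ih =>
    set y : ℝ := x / (2 * (k + 1))
    set c : ℝ := min (δ y) 1
    have hy : 0 < y := by positivity
    have hc : 0 < c := lt_min (hδ y hy) one_pos
    obtain ⟨ε, γ, hε, hγ, ih⟩ := ih (c * x) (by positivity)
    refine ⟨min ε y, x * γ / 2, lt_min hε hy, by positivity, fun n hn D hD A hA => ?_⟩
    set U : Finset (Fin n) := {u ∈ A v | ∀ j ∈ S, c * #(A j) ≤ #(candidates E D v u A j)}
    have hU : x / 2 * n ≤ #U := half_le_card_many_candidates hE hx.le (min_le_left _ _)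
      (min_le_right _ _) (fun e he => (hD e he).mono_eps (min_le_right _ _)) hA
    have hextend : ∀ u ∈ U, γ * n ^ k ≤ #(partialCopies E D S (candidates E D v u A)) := by
      refine fun u hu => ih n hn D (fun e he => (hD e he).mono_eps (min_le_left _ _)) _ ?_
      intro j hj
      calc c * x * n = c * (x * n) := mul_assoc _ _ _
        _ ≤ c * #(A j) := by gcongr; exact hA j (mem_insert_of_mem hj)
        _ ≤ #(candidates E D v u A j) := (mem_filter.1 hu).2 j hj
    have hn' : (0 : ℝ) < n := Nat.cast_pos.2 hn
    refine le_of_mul_le_mul_left ?_ hn'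
    calc n * (x * γ / 2 * n ^ k) = x / 2 * n * (γ * n ^ k) := by ring
      _ ≤ #U * (γ * n ^ k) := by gcongr
      _ ≤ ∑ u ∈ U, (#(partialCopies E D S (candidates E D v u A)) : ℝ) := by
          rw [← nsmul_eq_mul, ← sum_const]
          exact sum_le_sum hextend
      _ ≤ n * #(partialCopies E D (insert v S) A) := by
          exact_mod_cast sum_card_partialCopies_le hE hv (filter_subset _ _)

theorem exists_le_card_copies_of_lowerRegular (δ : ℝ → ℝ) (hδ : ∀ x, 0 < x → 0 < δ x)
    (E : Finset (Fin k × Fin k)) (hE : ∀ e ∈ E, e.1 < e.2) :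
    ∃ ε γ : ℝ, 0 < ε ∧ 0 < γ ∧ ∀ n : ℕ, 0 < n → ∀ D : Finset (Slot k n),
      (∀ e ∈ E, LowerRegular ε δ (pairGraph D e)) → γ * n ^ k ≤ #(copies E D) := by
  obtain ⟨ε, γ, hε, hγ, h⟩ := exists_le_card_partialCopies δ hδ E hE univ 1 one_pos
  refine ⟨ε, γ, hε, hγ, fun n hn D hD => (h n hn D hD (fun _ => univ) (by simp)).trans ?_⟩
  refine Nat.cast_le.2 (card_le_card fun f hf => mem_copies.2 fun e he => ?_)
  exact (mem_partialCopies.1 hf).1 e he (mem_univ _) (mem_univ _)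

end Embedding

section SecondMoment

variable {E E₀ : Finset (Fin k × Fin k)} {e : Fin k × Fin k} {D D' G : Finset (Slot k n)}
  {B : Finset (Fin n × Fin n)} {p : ℝ}

/-- The pairs of maps which agree on both ends of `e`: two canonical copies sharing the edge
at `e`. -/
def coincidentPairs (n : ℕ) (e : Fin k × Fin k) :
    Finset ((Fin k → Fin n) × (Fin k → Fin n)) :=
  {ff | Prod.map ff.1 ff.1 e = Prod.map ff.2 ff.2 e}

/-- The slots used by at least one of two canonical copies. -/
def pairSlots (E : Finset (Fin k × Fin k)) (ff : (Fin k → Fin n) × (Fin k → Fin n)) :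
    Finset (Slot k n) :=
  copySlots E ff.1 ∪ copySlots E ff.2

/-- The pair `e` is spread for `E` if, for every `J` containing `e`, the expected number of copies
of `E[J]` in the random graph of density `p` is at least `n ^ 2`, the number of places for `e`. -/
def IsSpread (n : ℕ) (p : ℝ) (E : Finset (Fin k × Fin k)) (e : Fin k × Fin k) : Prop :=
  ∀ J : Finset (Fin k), e.1 ∈ J → e.2 ∈ J →
    (n : ℝ) ^ 2 ≤ n ^ #J * p ^ #{e' ∈ E | e'.1 ∈ J ∧ e'.2 ∈ J}

lemma card_pairSlots_le (ff : (Fin k → Fin n) × (Fin k → Fin n)) :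
    #(pairSlots E ff) ≤ 2 * #E := by
  refine (card_union_le _ _).trans ?_
  rw [card_copySlots, card_copySlots, two_mul]

lemma two_mul_card_le_card_pairSlots_add (f f' : Fin k → Fin n) :
    2 * #E ≤ #(pairSlots E (f, f')) + #{e ∈ E | f' e.1 = f e.1 ∧ f' e.2 = f e.2} := by
  have hinter : copySlots E f ∩ copySlots E f' ⊆
      copySlots {e ∈ E | f' e.1 = f e.1 ∧ f' e.2 = f e.2} f := by
    intro s hs
    obtain ⟨hs, hs'⟩ := mem_inter.1 hs
    obtain ⟨e, he, rfl⟩ := mem_image.1 hs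
    obtain ⟨e', -, h⟩ := mem_image.1 hs'
    obtain ⟨rfl, h⟩ := Prod.mk.inj h
    exact mem_image_of_mem _ (mem_filter.2 ⟨he, Prod.mk.inj h⟩)
  have hcard := card_le_card hinter
  have hunion := card_union_add_card_inter (copySlots E f) (copySlots E f')
  rw [card_copySlots] at hcard
  rw [card_copySlots, card_copySlots] at hunion
  change 2 * #E ≤ #(copySlots E f ∪ copySlots E f') + _
  omega

lemma IsSpread.pow_card_pairSlots_le (hE : IsSpread n p E e) (hn : 0 < n) (hp : 0 < p)
    (hp1 : p ≤ 1) {f f' : Fin k → Fin n} (hff : (f, f') ∈ coincidentPairs n e) :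
    p ^ #(pairSlots E (f, f')) ≤
      (p ^ #E) ^ 2 / n ^ 2 * ∏ i, if f' i = f i then (n : ℝ) else 1 := by
  have : (0 : ℝ) < n := Nat.cast_pos.2 hn
  set J : Finset (Fin k) := {i | f' i = f i}
  have hmem : ∀ i, i ∈ J ↔ f' i = f i := fun i => by simp [J]
  obtain ⟨h1, h2⟩ := Prod.mk.inj (mem_filter.1 hff).2
  have hJ := hE J ((hmem _).2 h1.symm) ((hmem _).2 h2.symm)
  simp only [hmem] at hJ
  set s := #{e ∈ E | f' e.1 = f e.1 ∧ f' e.2 = f e.2}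
  have hpow : p ^ #(pairSlots E (f, f')) * p ^ s ≤ (p ^ #E) ^ 2 := by
    rw [← pow_add, ← pow_mul, mul_comm (#E)]
    exact pow_le_pow_of_le_one hp.le hp1 (two_mul_card_le_card_pairSlots_add f f')
  have hprod : ∏ i, (if f' i = f i then (n : ℝ) else 1) = n ^ #J := by
    rw [prod_ite, prod_const_one, mul_one, prod_const]
  rw [hprod, div_mul_eq_mul_div, le_div_iff₀ (by positivity)]
  calc p ^ #(pairSlots E (f, f')) * n ^ 2
      ≤ p ^ #(pairSlots E (f, f')) * (n ^ #J * p ^ s) := by gcongr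
    _ = p ^ #(pairSlots E (f, f')) * p ^ s * n ^ #J := by ring
    _ ≤ (p ^ #E) ^ 2 * n ^ #J := by gcongr

lemma sum_prod_ite_eq_le (f : Fin k → Fin n) :
    ∑ f' : Fin k → Fin n, ∏ i, (if f' i = f i then (n : ℝ) else 1) ≤ (2 * n) ^ k := by
  rw [← Fintype.prod_sum fun i w => if w = f i then (n : ℝ) else 1]
  calc ∏ i, ∑ w, (if w = f i then (n : ℝ) else 1)
      ≤ ∏ i, ∑ w, ((if w = f i then (n : ℝ) else 0) + 1) := by
        gcongr with i _ w
        split_ifs <;> simp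
    _ = (2 * n) ^ k := by simp [sum_add_distrib, two_mul]

/-- The second moment of the number of canonical copies, up to the factor `2 ^ k`. -/
noncomputable def secondMoment (n k : ℕ) (p : ℝ) (s : ℕ) : ℝ :=
  2 ^ k * (n ^ k) ^ 2 / n ^ 2 * (p ^ s) ^ 2

theorem IsSpread.sum_pow_card_pairSlots_le (hE : IsSpread n p E e) (hn : 0 < n) (hp : 0 < p)
    (hp1 : p ≤ 1) :
    ∑ ff ∈ coincidentPairs n e, p ^ #(pairSlots E ff) ≤ secondMoment n k p #E := by
  calc ∑ ff ∈ coincidentPairs n e, p ^ #(pairSlots E ff)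
      ≤ ∑ ff ∈ coincidentPairs n e,
          (p ^ #E) ^ 2 / n ^ 2 * ∏ i, (if ff.2 i = ff.1 i then (n : ℝ) else 1) :=
        sum_le_sum fun ff hff => hE.pow_card_pairSlots_le hn hp hp1 hff
    _ ≤ ∑ ff : (Fin k → Fin n) × (Fin k → Fin n),
          (p ^ #E) ^ 2 / n ^ 2 * ∏ i, (if ff.2 i = ff.1 i then (n : ℝ) else 1) :=
        sum_le_univ_sum_of_nonneg fun ff => mul_nonneg (by positivity)
          (prod_nonneg fun i _ => by split_ifs <;> positivity)
    _ = (p ^ #E) ^ 2 / n ^ 2 * ∑ f : Fin k → Fin n, ∑ f' : Fin k → Fin n,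
          ∏ i, (if f' i = f i then (n : ℝ) else 1) := by
        rw [← mul_sum, Fintype.sum_prod_type]
    _ ≤ (p ^ #E) ^ 2 / n ^ 2 * ∑ _f : Fin k → Fin n, (2 * n : ℝ) ^ k := by
        gcongr with f
        exact sum_prod_ite_eq_le f
    _ = secondMoment n k p #E := by
        simp only [sum_const, card_univ, Fintype.card_fun, Fintype.card_fin, nsmul_eq_mul,
          secondMoment]
        push_cast
        ring

/-- The maps which place `e` at the pair `uv` and all other edges of `E` in `D`. -/
def extensions (E : Finset (Fin k × Fin k)) (e : Fin k × Fin k) (D : Finset (Slot k n))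
    (uv : Fin n × Fin n) : Finset (Fin k → Fin n) :=
  {f ∈ copies (E.erase e) D | Prod.map f f e = uv}

lemma extensions_mono (h : D ⊆ D') (uv : Fin n × Fin n) :
    extensions E e D uv ⊆ extensions E e D' uv :=
  filter_subset_filter _ (copies_mono h)

lemma sum_card_extensions :
    ∑ uv ∈ B, #(extensions E e D uv) = #{f ∈ copies (E.erase e) D | Prod.map f f e ∈ B} :=
  sum_card_fiberwise_eq_card_filter _ _ _

lemma card_copies_union_le_sum_card_extensions (he : e ∈ E) (hD : ∀ s ∈ D, s.1 ≠ e) :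
    #(copies E (D ∪ {e} ×ˢ B)) ≤ ∑ uv ∈ B, #(extensions E e D uv) := by
  rw [sum_card_extensions]
  refine card_le_card fun f hf => mem_filter.2 ⟨mem_copies.2 fun e' he' => ?_, ?_⟩
  · obtain ⟨hne, he'⟩ := mem_erase.1 he'
    refine (mem_union.1 (mem_copies.1 hf e' he')).resolve_right fun h => hne ?_
    exact mem_singleton.1 (mem_product.1 h).1
  · have hfe := (mem_union.1 (mem_copies.1 hf e he)).resolve_left fun h => hD _ h rfl
    exact (mem_product.1 hfe).2

lemma sum_card_extensions_le_card_copies (hB : {e} ×ˢ B ⊆ D) :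
    ∑ uv ∈ B, #(extensions E e D uv) ≤ #(copies E D) := by
  rw [sum_card_extensions]
  refine card_le_card fun f hf => mem_copies.2 fun e' he' => ?_
  obtain ⟨hf, hfB⟩ := mem_filter.1 hf
  by_cases h : e' = e
  · exact hB (mem_product.2 ⟨mem_singleton.2 h, h ▸ hfB⟩)
  · exact mem_copies.1 hf e' (mem_erase.2 ⟨h, he'⟩)

lemma sum_sq_card_extensions_le (hE₀ : E₀ ⊆ E.erase e) (hD : ∀ s ∈ D, s.1 ∉ E₀) :
    ∑ uv ∈ B, #(extensions E e (D ∪ G) uv) ^ 2 ≤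
      #{ff ∈ coincidentPairs n e | pairSlots E₀ ff ⊆ G} := by
  have hsub : ∀ f ∈ copies (E.erase e) (D ∪ G), copySlots E₀ f ⊆ G := by
    refine fun f hf => image_subset_iff.2 fun e' he' => ?_
    exact (mem_union.1 (mem_copies.1 hf e' (hE₀ he'))).resolve_left fun h => hD _ h he'
  simp only [sq, ← card_product]
  rw [← card_biUnion]
  · refine card_le_card fun ff hff => ?_
    simp only [mem_biUnion, mem_product, extensions, mem_filter] at hff
    obtain ⟨uv, -, ⟨hf, hfe⟩, hf', hfe'⟩ := hff
    exact mem_filter.2 ⟨mem_filter.2 ⟨mem_univ _, hfe.trans hfe'.symm⟩,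
      union_subset (hsub _ hf) (hsub _ hf')⟩
  · refine fun uv _ uv' _ hne => disjoint_left.2 fun ff hff hff' => hne ?_
    exact (mem_filter.1 (mem_product.1 hff).1).2.symm.trans (mem_filter.1 (mem_product.1 hff').1).2

lemma sq_le_mul_card_filter_of_sum_sq_le {ι : Type*} {s : Finset ι} {d : ι → ℝ} {N Q t : ℝ}
    (hN : 0 ≤ N) (ht : t * #s ≤ N / 2) (hd : N ≤ ∑ i ∈ s, d i) (hQ : ∑ i ∈ s, d i ^ 2 ≤ Q) :
    N ^ 2 ≤ 4 * Q * #{i ∈ s | t ≤ d i} := by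
  classical
  have hsmall : ∑ i ∈ s with ¬ t ≤ d i, d i ≤ N / 2 := by
    rcases le_or_gt 0 t with ht0 | ht0
    · calc ∑ i ∈ s with ¬ t ≤ d i, d i ≤ ∑ i ∈ s with ¬ t ≤ d i, t :=
            sum_le_sum fun _ hi => (not_le.1 (mem_filter.1 hi).2).le
        _ ≤ ∑ _ ∈ s, t := sum_le_sum_of_subset_of_nonneg (filter_subset _ _) fun _ _ _ => ht0
        _ ≤ N / 2 := by rwa [sum_const, nsmul_eq_mul, mul_comm]
    · refine (sum_nonpos fun i hi => ?_).trans (by positivity)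
      exact ((not_le.1 (mem_filter.1 hi).2).trans ht0).le
  have hlarge : N / 2 ≤ ∑ i ∈ s with t ≤ d i, d i := by
    linarith [sum_filter_add_sum_filter_not s (fun i => t ≤ d i) d]
  have hcs : (N / 2) ^ 2 ≤ #{i ∈ s | t ≤ d i} * Q :=
    calc (N / 2) ^ 2 ≤ (∑ i ∈ s with t ≤ d i, d i) ^ 2 := by gcongr
      _ ≤ #{i ∈ s | t ≤ d i} * ∑ i ∈ s with t ≤ d i, d i ^ 2 := sq_sum_le_card_mul_sum_sq
      _ ≤ #{i ∈ s | t ≤ d i} * Q := by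
          gcongr
          exact (sum_le_sum_of_subset_of_nonneg (filter_subset _ _)
            fun i _ _ => sq_nonneg (d i)).trans hQ
  linarith

end SecondMoment

section Round

variable {E E₀ : Finset (Fin k × Fin k)} {e : Fin k × Fin k} {D G : Finset (Slot k n)}
  {B : Finset (Fin n × Fin n)} {p ε c : ℝ}

/-- `G` is lower-regular of density `c` on every pair of `E₀`. -/
def LowerRegularOn (E₀ : Finset (Fin k × Fin k)) (ε c : ℝ) (G : Finset (Slot k n)) : Prop :=
  ∀ e ∈ E₀, LowerRegular ε (fun _ => c) (pairGraph G e)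

/-- `G` is lower-regular of density `c` on all pairs of `E₀`, but together with the dense
background `D` it contains fewer than `N` canonical copies. -/
def CopyPoor (E E₀ : Finset (Fin k × Fin k)) (D : Finset (Slot k n)) (ε c N : ℝ)
    (G : Finset (Slot k n)) : Prop :=
  LowerRegularOn E₀ ε c G ∧ (#(copies E (D ∪ G)) : ℝ) < N

/-- The places for `e` which extend to at least `t` canonical copies. -/
noncomputable def richPairs (E : Finset (Fin k × Fin k)) (e : Fin k × Fin k)
    (D : Finset (Slot k n)) (t : ℝ) : Finset (Fin n × Fin n) :=
  {uv | t ≤ #(extensions E e D uv)}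

/-- The exceptional event for a round which reveals `G` when `B` is the set of unexposed places
for `e`: either more than `M` pairs of coincident copies survive every deletion of `z` edges, or
some subgraph of `G` is copy-poor over the background `D` enlarged by `B`. -/
def RoundFails (E E₀ : Finset (Fin k × Fin k)) (e : Fin k × Fin k) (D : Finset (Slot k n))
    (ε c N M : ℝ) (z : ℕ) (B : Finset (Fin n × Fin n)) (G : Finset (Slot k n)) : Prop :=
  DeletionResistant (coincidentPairs n e) (pairSlots E₀) M z G ∨
    ∃ G' ⊆ G, CopyPoor E E₀ (D ∪ {e} ×ˢ B) ε c N G'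

lemma card_slots (E : Finset (Fin k × Fin k)) :
    (#(E ×ˢ (univ : Finset (Fin n × Fin n))) : ℝ) = #E * n ^ 2 := by
  simp [card_product, sq]

lemma card_mul_le_card_copies {Z : Finset (Fin n × Fin n)} {t : ℝ} (hZD : {e} ×ˢ Z ⊆ D)
    (hZ : Z ⊆ richPairs E e D t) : #Z * t ≤ #(copies E D) := by
  calc #Z * t = ∑ _uv ∈ Z, t := by rw [sum_const, nsmul_eq_mul]
    _ ≤ ∑ uv ∈ Z, (#(extensions E e D uv) : ℝ) := sum_le_sum fun uv h => (mem_filter.1 (hZ h)).2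
    _ ≤ #(copies E D) := mod_cast sum_card_extensions_le_card_copies hZD

lemma richPairs_mono {D' : Finset (Slot k n)} (h : D ⊆ D') (t : ℝ) :
    richPairs E e D t ⊆ richPairs E e D' t :=
  monotone_filter_right _ fun uv _ ht =>
    le_trans ht (Nat.cast_le.2 (card_le_card (extensions_mono h uv)))

lemma fst_ne_of_mem_union (hE₀ : E₀ ⊆ E.erase e) (hD : ∀ s ∈ D, s.1 ∉ insert e E₀)
    (hG : G ⊆ E₀ ×ˢ univ) : ∀ s ∈ D ∪ G, s.1 ≠ e := by
  rintro s hs rfl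
  rcases mem_union.1 hs with hs | hs
  · exact hD s hs (mem_insert_self _ _)
  · exact notMem_erase _ _ (hE₀ (mem_product.1 (hG hs)).1)

/-- The gain of a successful round: by the Cauchy–Schwarz inequality many copies with few
coincidences use many different places for `e`. -/
theorem sq_le_card_inter_richPairs (he : e ∈ E) (hE₀ : E₀ ⊆ E.erase e)
    (hD : ∀ s ∈ D, s.1 ∉ insert e E₀) (hn : 0 < n) (hε : 0 ≤ ε) (hc : 0 ≤ c) {N M : ℝ}
    (hN : 0 ≤ N) {z : ℕ} (hz : (z : ℝ) ≤ c * ε ^ 2 * n ^ 2) (hG : G ⊆ E₀ ×ˢ univ)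
    (hreg : LowerRegularOn E₀ ε (2 * c) G)
    (hok : ¬ RoundFails E E₀ e D ε c N M z B G) :
    N ^ 2 ≤ 4 * M * #(B ∩ richPairs E e (D ∪ G) (N / (2 * n ^ 2))) := by
  obtain ⟨hdel, hpoor⟩ := not_or.1 hok
  simp only [DeletionResistant, not_forall, not_lt] at hdel
  obtain ⟨G', hG', hcard, hM⟩ := hdel
  have hreg' : LowerRegularOn E₀ ε c G' := by
    refine fun e' he' => (hreg e' he').card_sdiff_le hc hε (le_trans ?_ hz)
    refine Nat.cast_le.2 (le_trans ?_ hcard)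
    refine card_le_card_of_injOn (fun uv => (e', uv)) (fun uv huv => ?_) fun _ _ _ _ h =>
      (Prod.mk.inj h).2
    simpa [mem_pairGraph] using huv
  have hcopies : N ≤ #(copies E (D ∪ G' ∪ {e} ×ˢ B)) := by
    rw [union_right_comm]
    exact not_lt.1 fun h => hpoor ⟨G', hG', hreg', h⟩
  have hsum : N ≤ ∑ uv ∈ B, (#(extensions E e (D ∪ G') uv) : ℝ) := hcopies.trans <| mod_cast
    card_copies_union_le_sum_card_extensions he (fst_ne_of_mem_union hE₀ hD (hG'.trans hG))
  have hsq : ∑ uv ∈ B, (#(extensions E e (D ∪ G') uv) : ℝ) ^ 2 ≤ M := le_trans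
    (mod_cast sum_sq_card_extensions_le hE₀ fun s hs h => hD s hs (mem_insert_of_mem h)) hM
  have ht : N / (2 * n ^ 2) * #B ≤ N / 2 := by
    have hB : (#B : ℝ) ≤ n ^ 2 := by exact_mod_cast (card_le_univ B).trans_eq (by simp [sq])
    have : (0 : ℝ) < n := Nat.cast_pos.2 hn
    rw [div_mul_eq_mul_div, div_le_div_iff₀ (by positivity) two_pos]
    nlinarith
  have hM0 : 0 ≤ M := (sum_nonneg fun uv _ => sq_nonneg _).trans hsq
  refine (sq_le_mul_card_filter_of_sum_sq_le hN ht hsum hsq).trans ?_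
  gcongr
  intro uv huv
  obtain ⟨huvB, ht⟩ := mem_filter.1 huv
  exact mem_inter.2 ⟨huvB, richPairs_mono (union_subset_union_right hG') _
    (mem_filter.2 ⟨mem_univ _, ht⟩)⟩

theorem subsetWeight_roundFails_le (hspread : IsSpread n p E₀ e) (hn : 0 < n) (hp : 0 < p)
    (hp1 : p ≤ 1) (hm : 1 ≤ p * n ^ 2) {N K b : ℝ} (hK : 0 < K) {z : ℕ}
    (hz : K⁻¹ ^ z ≤ Real.exp (-b * (p * n ^ 2)))
    (hpoor : subsetWeight p (E₀ ×ˢ univ) (CopyPoor E E₀ (D ∪ {e} ×ˢ B) ε c N) ≤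
      Real.exp (-b * (p * n ^ 2))) :
    subsetWeight p (E₀ ×ˢ univ) (RoundFails E E₀ e D ε c N (K * secondMoment n k p #E₀)
      (2 * #E₀ * z) B) ≤ Real.exp (-(b - #E₀ - 1) * (p * n ^ 2)) := by
  have : (0 : ℝ) < n := Nat.cast_pos.2 hn
  set V : Finset (Slot k n) := E₀ ×ˢ univ
  have hV : p * #V = #E₀ * (p * n ^ 2) := by rw [card_slots]; ring
  have hdel := subsetWeight_deletionResistant_le (V := V) hp.le (coincidentPairs n e)
    (pairSlots E₀) (fun ff _ => card_pairSlots_le ff) (M := secondMoment n k p #E₀)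
    (by unfold secondMoment; positivity) hK (hspread.sum_pow_card_pairSlots_le hn hp hp1) z
  have hsub := subsetWeight_exists_subset_le (V := V) hp.le
    (P := CopyPoor E E₀ (D ∪ {e} ×ˢ B) ε c N)
  rw [hV] at hdel hsub
  have hexp : (2 : ℝ) ≤ Real.exp (p * n ^ 2) := by linarith [Real.add_one_le_exp (p * (n : ℝ) ^ 2)]
  refine (subsetWeight_or_le hp.le).trans ((add_le_add hdel hsub).trans ?_)
  calc K⁻¹ ^ z * Real.exp (#E₀ * (p * n ^ 2)) + Real.exp (#E₀ * (p * n ^ 2)) *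
        subsetWeight p V (CopyPoor E E₀ (D ∪ {e} ×ˢ B) ε c N)
      ≤ Real.exp (-b * (p * n ^ 2)) * Real.exp (#E₀ * (p * n ^ 2)) +
        Real.exp (#E₀ * (p * n ^ 2)) * Real.exp (-b * (p * n ^ 2)) := by gcongr
    _ = 2 * (Real.exp (-b * (p * n ^ 2)) * Real.exp (#E₀ * (p * n ^ 2))) := by ring
    _ ≤ Real.exp (p * n ^ 2) *
        (Real.exp (-b * (p * n ^ 2)) * Real.exp (#E₀ * (p * n ^ 2))) := by gcongr
    _ = Real.exp (-(b - #E₀ - 1) * (p * n ^ 2)) := by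
        rw [← Real.exp_add, ← Real.exp_add]
        ring_nf

end Round

section Exposure

variable {ι β : Type*} [DecidableEq β] {Fail : Finset β → ι → Prop} {R : ι → Finset β}

open Classical in
/-- The number of failing rounds when round `i` removes `R (g i)` from the current set, which is
`s` at the beginning, and a round with input `x` from the set `B` fails if `Fail B x`. -/
noncomputable def failureCount (Fail : Finset β → ι → Prop) (R : ι → Finset β) :
    (T : ℕ) → Finset β → (Fin T → ι) → ℕ
  | 0, _, _ => 0
  | T + 1, s, g =>
    (if Fail s (g 0) then 1 else 0) + failureCount Fail R T (s \ R (g 0)) (Fin.tail g)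

lemma sum_piFinset_succ {M : Type*} [AddCommMonoid M] (T : ℕ) (X : Finset ι)
    (f : (Fin (T + 1) → ι) → M) :
    ∑ g ∈ Fintype.piFinset (fun _ : Fin (T + 1) => X), f g =
      ∑ x ∈ X, ∑ g ∈ Fintype.piFinset (fun _ : Fin T => X), f (Fin.cons x g) := by
  rw [← sum_product']
  refine sum_equiv (Fin.consEquiv fun _ => ι).symm (fun g => ?_) fun g _ => ?_
  · simp [Fin.consEquiv, Fin.forall_fin_succ, Fin.tail]
  · simp [Fin.consEquiv]

open Classical in
theorem sum_prod_mul_pow_failureCount_le {X : Finset ι} {w : ι → ℝ} (hw : ∀ x, 0 ≤ w x)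
    {W φ M : ℝ} (hM : 0 ≤ M) (hW : ∑ x ∈ X, w x ≤ W)
    (hφ : ∀ s, ∑ x ∈ X with Fail s x, w x ≤ φ) (T : ℕ) (s : Finset β) :
    ∑ g ∈ Fintype.piFinset (fun _ : Fin T => X), (∏ i, w (g i)) * M ^ failureCount Fail R T s g ≤
      (W + M * φ) ^ T := by
  induction T generalizing s with
  | zero => simp [failureCount]
  | succ T ih =>
    have hround : ∑ x ∈ X, w x * M ^ (if Fail s x then 1 else 0) ≤ W + M * φ := by
      calc ∑ x ∈ X, w x * M ^ (if Fail s x then 1 else 0)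
          ≤ ∑ x ∈ X, (w x + if Fail s x then M * w x else 0) := by
            refine sum_le_sum fun x _ => ?_
            split_ifs
            · linarith [hw x, mul_comm (w x) (M ^ 1), pow_one M]
            · simp
        _ = ∑ x ∈ X, w x + M * ∑ x ∈ X with Fail s x, w x := by
            rw [sum_add_distrib, ← sum_filter, mul_sum]
        _ ≤ W + M * φ := by gcongr; exact hφ s
    rw [sum_piFinset_succ]
    calc _ = ∑ x ∈ X, w x * M ^ (if Fail s x then 1 else 0) *
          ∑ g ∈ Fintype.piFinset (fun _ : Fin T => X),
            (∏ i, w (g i)) * M ^ failureCount Fail R T (s \ R x) g := by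
          refine sum_congr rfl fun x _ => ?_
          rw [mul_sum]
          refine sum_congr rfl fun g _ => ?_
          simp only [failureCount, Fin.prod_univ_succ, Fin.cons_zero, Fin.cons_succ,
            Fin.tail_cons, pow_add]
          ring
      _ ≤ ∑ x ∈ X, w x * M ^ (if Fail s x then 1 else 0) * (W + M * φ) ^ T :=
          sum_le_sum fun x _ => mul_le_mul_of_nonneg_left (ih _)
            (mul_nonneg (hw x) (pow_nonneg hM _))
      _ ≤ (W + M * φ) * (W + M * φ) ^ T := by
          rw [← sum_mul]
          exact mul_le_mul_of_nonneg_right hround ((sum_nonneg fun g _ => mul_nonneg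
            (prod_nonneg fun _ _ => hw _) (pow_nonneg hM _)).trans (ih s))
      _ = (W + M * φ) ^ (T + 1) := (pow_succ' _ _).symm

lemma mul_sub_failureCount_le_card {Good : Finset β → Prop}
    (hGood : ∀ s t, s ⊆ t → Good s → Good t) {gain : ℝ} {T : ℕ} {s : Finset β} {g : Fin T → ι}
    (hgain : ∀ s, Good s → ∀ i, ¬ Fail s (g i) → gain ≤ #(s ∩ R (g i)))
    (hs : Good (s \ univ.biUnion fun i => R (g i))) :
    gain * (T - failureCount Fail R T s g) ≤ #s := by
  induction T generalizing s with
  | zero => simp [failureCount]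
  | succ T ih =>
    have htail : s \ univ.biUnion (fun i => R (g i)) =
        (s \ R (g 0)) \ univ.biUnion fun i => R (Fin.tail g i) := by
      ext b
      simp [Fin.forall_fin_succ, Fin.tail, and_assoc]
    have hrec := ih (g := Fin.tail g) (fun s hs i => hgain s hs i.succ) (htail ▸ hs)
    have hcard : (#(s \ R (g 0)) : ℝ) + #(s ∩ R (g 0)) = #s :=
      mod_cast card_sdiff_add_card_inter s (R (g 0))
    simp only [failureCount]
    split_ifs with hF
    · push_cast
      linarith [(#(s ∩ R (g 0))).cast_nonneg (α := ℝ)]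
    · push_cast
      linarith [hgain s (hGood _ _ sdiff_subset hs) 0 hF]

lemma half_le_failureCount {Good : Finset β → Prop} (hGood : ∀ s t, s ⊆ t → Good s → Good t)
    {gain : ℝ} (hpos : 0 < gain) {T : ℕ} {s : Finset β} {g : Fin T → ι}
    (hgain : ∀ s, Good s → ∀ i, ¬ Fail s (g i) → gain ≤ #(s ∩ R (g i)))
    (hT : 2 * #s ≤ gain * T) (hs : Good (s \ univ.biUnion fun i => R (g i))) :
    (T / 2 : ℝ) ≤ failureCount Fail R T s g := by
  have h := mul_sub_failureCount_le_card hGood hgain hs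
  by_contra! hlt
  nlinarith

end Exposure

section ColourRegular

variable {E₀ : Finset (Fin k × Fin k)} {G : Finset (Slot k n)} {ε c : ℝ} {T : ℕ}

lemma lowerRegular_const_iff {B : Finset (Fin n × Fin n)} :
    LowerRegular ε (fun _ => c) B ↔ ∀ A A' : Finset (Fin n), ε * n ≤ #A → ε * n ≤ #A' →
      c * (#A * #A') ≤ #(B ∩ A ×ˢ A') :=
  ⟨fun h => h ε le_rfl, fun h _ hx A A' hA hA' => h A A'
    ((mul_le_mul_of_nonneg_right hx n.cast_nonneg).trans hA)
    ((mul_le_mul_of_nonneg_right hx n.cast_nonneg).trans hA')⟩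

lemma card_pairGraph_inter (G : Finset (Slot k n)) (e : Fin k × Fin k)
    (W : Finset (Fin n × Fin n)) : #(pairGraph G e ∩ W) = #(G ∩ {e} ×ˢ W) := by
  refine card_bij (fun uv _ => (e, uv)) ?_ (fun _ _ _ _ h => (Prod.mk.inj h).2) ?_
  · simp [mem_pairGraph]
  · rintro ⟨e', uv⟩ h
    obtain ⟨hG, he, hW⟩ : (e', uv) ∈ G ∧ e' = e ∧ uv ∈ W := by
      simpa only [mem_inter, mem_product, mem_singleton] using h
    subst he
    exact ⟨uv, mem_inter.2 ⟨mem_pairGraph.2 hG, hW⟩, rfl⟩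

lemma mul_sq_le_of_le_card (hε : 0 ≤ ε) (hc : 0 ≤ c) {A A' : Finset (Fin n)} (hA : ε * n ≤ #A)
    (hA' : ε * n ≤ #A') : c * ε ^ 2 * n ^ 2 ≤ c * (#A * #A') := by
  calc c * ε ^ 2 * n ^ 2 = c * ((ε * n) * (ε * n)) := by ring
    _ ≤ c * (#A * #A') := by gcongr

lemma card_colouring_low_density_le (hε : 0 ≤ ε) (hc : 0 ≤ c) {e : Fin k × Fin k}
    (hG : LowerRegular ε (fun _ => c) (pairGraph G e)) {A A' : Finset (Fin n)}
    (hA : ε * n ≤ #A) (hA' : ε * n ≤ #A') (i : Fin T) :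
    (#{h : G → Fin T | (#(pairGraph (colourClass h i) e ∩ A ×ˢ A') : ℝ) <
      c / (4 * T) * (#A * #A')} : ℝ) ≤ T ^ #G * Real.exp (-(c * ε ^ 2 * n ^ 2 / (4 * T))) := by
  set F := G ∩ {e} ×ˢ (A ×ˢ A')
  have hF : c * (#A * #A') ≤ #F := by
    rw [← card_pairGraph_inter]
    exact hG ε le_rfl A A' hA hA'
  have hclass : ∀ h : G → Fin T, F ∩ colourClass h i = colourClass h i ∩ {e} ×ˢ (A ×ˢ A') := by
    intro h
    have hsub : colourClass h i ⊆ G := fun v hv => (mem_colourClass.1 hv).1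
    rw [inter_right_comm, inter_eq_right.2 hsub]
  refine le_trans ?_ ((card_colouring_small_class_le (inter_subset_left : F ⊆ G) i).trans ?_)
  · refine Nat.cast_le.2 (card_le_card (monotone_filter_right _ fun h _ hh => ?_))
    rw [hclass, ← card_pairGraph_inter]
    calc _ < c / (4 * T) * (#A * #A') := hh
      _ = c * (#A * #A') / (4 * T) := by ring
      _ ≤ #F / (4 * T) := by gcongr
  · gcongr
    exact (mul_sq_le_of_le_card hε hc hA hA').trans hF

open Classical in
theorem pow_card_le_two_mul_card_lowerRegular_colouring (hε : 0 ≤ ε) (hc : 0 ≤ c)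
    (hG : LowerRegularOn E₀ ε c G)
    (hbig : 2 * (T * #E₀ * 4 ^ n : ℝ) ≤ Real.exp (c * ε ^ 2 * n ^ 2 / (4 * T))) :
    (T : ℝ) ^ #G ≤ 2 * #{h : G → Fin T | ∀ i,
      LowerRegularOn E₀ ε (c / (4 * T)) (colourClass h i)} := by
  set X := Real.exp (c * ε ^ 2 * n ^ 2 / (4 * T))
  set good : (G → Fin T) → Prop := fun h => ∀ i, LowerRegularOn E₀ ε (c / (4 * T)) (colourClass h i)
  set I : Finset (Fin T × (Fin k × Fin k) × Finset (Fin n) × Finset (Fin n)) :=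
    {x ∈ univ ×ˢ E₀ ×ˢ univ | ε * n ≤ #x.2.2.1 ∧ ε * n ≤ #x.2.2.2}
  have hI : (#I : ℝ) ≤ T * #E₀ * 4 ^ n := by
    have h4 : 4 ^ n = 2 ^ n * 2 ^ n := by rw [← mul_pow]; norm_num
    refine mod_cast (card_filter_le _ _).trans_eq ?_
    simp [card_product, h4, mul_assoc]
  have hcover : ({h | ¬ good h} : Finset (G → Fin T)) ⊆ I.biUnion fun x =>
      {h | (#(pairGraph (colourClass h x.1) x.2.1 ∩ x.2.2.1 ×ˢ x.2.2.2) : ℝ) <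
        c / (4 * T) * (#x.2.2.1 * #x.2.2.2)} := by
    intro h hh
    simp only [good, LowerRegularOn, mem_filter, mem_univ, true_and, lowerRegular_const_iff,
      not_forall, not_le] at hh
    obtain ⟨i, e, he, A, A', hA, hA', hlt⟩ := hh
    exact mem_biUnion.2 ⟨(i, e, A, A'), by simp [I, he, hA, hA'], by simpa using hlt⟩
  have hbad : (#{h | ¬ good h} : ℝ) ≤ #I * (T ^ #G * X⁻¹) := by
    refine (Nat.cast_le.2 ((card_le_card hcover).trans card_biUnion_le)).trans ?_
    rw [Nat.cast_sum, ← nsmul_eq_mul]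
    refine sum_le_card_nsmul _ _ _ fun x hx => ?_
    simp only [I, mem_filter, mem_product, mem_univ, true_and, and_true] at hx
    rw [← Real.exp_neg]
    exact card_colouring_low_density_le hε hc (hG _ hx.1) hx.2.1 hx.2.2 x.1
  have htotal : (#{h | good h} : ℝ) + #{h | ¬ good h} = T ^ #G := by
    exact_mod_cast (card_filter_add_card_filter_not good).trans (by simp)
  have hX : #I * X⁻¹ ≤ 1 / 2 := by
    rw [← div_eq_mul_inv, div_le_iff₀ (Real.exp_pos _)]
    linarith
  have hTG : (0 : ℝ) ≤ T ^ #G := by positivity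
  nlinarith [mul_le_mul_of_nonneg_left hX hTG]

/-- The density function with respect to which the unexposed places are required to be
lower-regular; it is tuned so that `subsetWeight_le_of_not_lowerRegular_exposureDensity` beats
`exp (-b * (p * n ^ 2))`. -/
noncomputable def exposureDensity (b lam x : ℝ) : ℝ := Real.exp (-(2 * b / (lam * x ^ 2)))

/-- A set which is not lower-regular has a sparse rectangle; a lower-regular random set has many
pairs there, and unless they avoid `B` this is a large deviation. -/
theorem subsetWeight_le_of_not_lowerRegular_exposureDensity {p b lam : ℝ} (hn : 0 < n) (hp : 0 < p)
    (hlam : 0 < lam) (hε : 0 < ε) (hb : 0 ≤ b) {B : Finset (Fin n × Fin n)}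
    (hB : ¬ LowerRegular ε (exposureDensity b lam) B) :
    subsetWeight p univ (fun Y : Finset (Fin n × Fin n) => LowerRegular ε (fun _ => lam * p) Y ∧
      #(Y \ B) ≤ lam * p / 2 * ε ^ 2 * n ^ 2) ≤ Real.exp ((2 - b) * (p * n ^ 2)) := by
  simp only [LowerRegular, not_forall, not_le] at hB
  obtain ⟨x, hx, A, A', hA, hA', hsparse⟩ := hB
  have hx0 : 0 < x := hε.trans_le hx
  have hn' : (0 : ℝ) < n := Nat.cast_pos.2 hn
  set F := B ∩ A ×ˢ A'
  set L := Real.exp (2 * b / (lam * x ^ 2))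
  have hAA' : (#A * #A' : ℝ) ≤ n ^ 2 := by
    rw [sq]
    exact_mod_cast Nat.mul_le_mul (card_finset_fin_le A) (card_finset_fin_le A')
  have hF : L * #F ≤ n ^ 2 := by
    rw [exposureDensity, Real.exp_neg, inv_mul_eq_div, lt_div_iff₀ (Real.exp_pos _)] at hsparse
    linarith
  have hdev : b * (p * n ^ 2) ≤ lam * p / 2 * (#A * #A') * Real.log L := by
    calc b * (p * n ^ 2) = b * p / x ^ 2 * x ^ 2 * n ^ 2 := by field_simp
      _ ≤ b * p / x ^ 2 * (#A * #A') := mul_sq_le_of_le_card hx0.le (by positivity) hA hA'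
      _ = lam * p / 2 * (#A * #A') * Real.log L := by
          rw [Real.log_exp]
          field_simp
  refine (subsetWeight_mono hp.le (Q := fun Y => lam * p / 2 * (#A * #A') ≤ #(Y ∩ F)) ?_).trans
    ((subsetWeight_le_card_inter_le hp.le F (L := L) (Real.one_le_exp (by positivity)) _).trans ?_)
  · rintro Y - ⟨hreg, hout⟩
    have hcard : (#(Y ∩ A ×ˢ A') : ℝ) ≤ #(Y ∩ F) + #(Y \ B) := by
      refine mod_cast (card_le_card fun s => ?_).trans (card_union_le _ _)
      simp only [F, mem_inter, mem_union, mem_sdiff]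
      tauto
    have hsmall := mul_sq_le_of_le_card (c := lam * p / 2) hε.le (by positivity)
      ((mul_le_mul_of_nonneg_right hx hn'.le).trans hA)
      ((mul_le_mul_of_nonneg_right hx hn'.le).trans hA')
    linarith [hreg x hx A A' hA hA']
  · have hcard : (#(univ : Finset (Fin n × Fin n)) : ℝ) = n ^ 2 := by simp [sq]
    rw [Real.exp_le_exp, hcard, mul_assoc p L]
    linarith [mul_le_mul_of_nonneg_left hF hp.le]

end ColourRegular

section Step

lemma subsetWeight_insert_product {ι β : Type*} [DecidableEq ι] [DecidableEq β] [Fintype β]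
    {E₀ : Finset ι} {e : ι} (he : e ∉ E₀) (p : ℝ) (P : Finset (ι × β) → Prop) :
    subsetWeight p (insert e E₀ ×ˢ univ) P = ∑ X ∈ (E₀ ×ˢ (univ : Finset β)).powerset,
      p ^ #X * subsetWeight p univ (fun Y => P (X ∪ {e} ×ˢ Y)) := by
  have hne : ∀ X ⊆ E₀ ×ˢ (univ : Finset β), ∀ v, (e, v) ∉ X := fun X hX v h =>
    he (mem_product.1 (hX h)).1
  simp only [subsetWeight, mul_sum, sum_filter, mul_ite, mul_zero, ← pow_add]
  rw [← sum_product']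
  symm
  refine sum_nbij' (fun XY : Finset (ι × β) × Finset β => XY.1 ∪ {e} ×ˢ XY.2)
    (fun G => ({s ∈ G | s.1 ≠ e}, univ.filter fun v => (e, v) ∈ G)) ?_ ?_ ?_ ?_ ?_
  · rintro ⟨X, Y⟩ hXY
    simp only [mem_product, mem_powerset] at hXY ⊢
    exact union_subset (hXY.1.trans (product_subset_product_left (subset_insert _ _)))
      (product_subset_product (by simp) (subset_univ _))
  · intro G hG
    simp only [mem_product, mem_powerset, subset_univ, and_true] at hG ⊢
    intro s hs
    obtain ⟨hs, hse⟩ := mem_filter.1 hs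
    exact mem_product.2 ⟨mem_of_mem_insert_of_ne (mem_product.1 (hG hs)).1 hse, mem_univ _⟩
  · rintro ⟨X, Y⟩ hXY
    have hX := hne X (mem_powerset.1 (mem_product.1 hXY).1)
    refine Prod.ext (Finset.ext fun ⟨i, v⟩ => ?_) (Finset.ext fun v => by simp [hX])
    rcases eq_or_ne i e with rfl | hi
    · simp [hX]
    · simp [hi, hi.symm]
  · rintro G -
    ext ⟨i, v⟩
    rcases eq_or_ne i e with rfl | hi
    · simp
    · simp [hi, hi.symm]
  · rintro ⟨X, Y⟩ hXY
    have hX := hne X (mem_powerset.1 (mem_product.1 hXY).1)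
    have hdisj : Disjoint X ({e} ×ˢ Y) := disjoint_right.2 fun ⟨i, v⟩ hs hs' =>
      hX v (mem_singleton.1 (mem_product.1 hs).1 ▸ hs')
    rw [card_union_of_disjoint hdisj, card_product, card_singleton, one_mul]

variable {E E₀ : Finset (Fin k × Fin k)} {e : Fin k × Fin k} {D G : Finset (Slot k n)}
  {ε p lam b gain t N : ℝ} {T : ℕ}

lemma pairGraph_union_of_notMem (he : e ∉ E₀) (hG : G ⊆ E₀ ×ˢ univ) (Y : Finset (Fin n × Fin n)) :
    pairGraph (G ∪ {e} ×ˢ Y) e = Y := by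
  ext uv
  have hne : (e, uv) ∉ G := fun h => he (mem_product.1 (hG h)).1
  simp [mem_pairGraph, hne]

lemma CopyPoor.card_sdiff_le {E₁ : Finset (Fin k × Fin k)} {c s : ℝ} {Y B : Finset (Fin n × Fin n)}
    (h : CopyPoor E E₁ D ε c N (G ∪ {e} ×ˢ Y)) (ht : 0 < t) (hN : N ≤ s * t)
    (hB : Y \ B ⊆ richPairs E e (D ∪ G) t) : #(Y \ B) ≤ s := by
  refine le_of_mul_le_mul_right (LE.le.trans ?_ (h.2.le.trans hN)) ht
  refine card_mul_le_card_copies ?_ (hB.trans (richPairs_mono ?_ t))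
  · exact (product_subset_product_right sdiff_subset).trans
      (subset_union_right.trans subset_union_right)
  · exact union_subset_union_right subset_union_left

/-- If the unexposed places stay lower-regular then half of the rounds fail, and otherwise
`subsetWeight_le_of_not_lowerRegular_exposureDensity` applies. -/
lemma subsetWeight_copyPoor_union_le {Fail : Finset (Fin n × Fin n) → Finset (Slot k n) → Prop}
    {g : Fin T → Finset (Slot k n)} (he : e ∉ E₀) (hg : univ.biUnion g ⊆ E₀ ×ˢ univ) (hn : 0 < n)
    (hT : 0 < T) (hp : 0 < p) (hlam : 0 < lam) (hε : 0 < ε) (hb : 0 ≤ b) (ht : 0 < t)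
    (hgain : 0 < gain) (hTgain : 2 ≤ gain * T) (hN : N ≤ lam * p / 2 * ε ^ 2 * n ^ 2 * t)
    (hround : ∀ B, LowerRegular ε (exposureDensity b lam) B → ∀ i, ¬ Fail B (g i) →
      gain * n ^ 2 ≤ #(B ∩ richPairs E e (D ∪ g i) t)) :
    subsetWeight p univ (fun Y =>
        CopyPoor E (insert e E₀) D ε (lam * p) N (univ.biUnion g ∪ {e} ×ˢ Y)) ≤
      Real.exp ((2 - b) * (p * n ^ 2)) * Real.exp (2 * b * (p * n ^ 2) / T) ^
        failureCount Fail (fun G => richPairs E e (D ∪ G) t) T univ g := by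
  have hn' : (0 : ℝ) < n := Nat.cast_pos.2 hn
  have hcard : (#(univ : Finset (Fin n × Fin n)) : ℝ) = n ^ 2 := by simp [sq]
  set B := (univ : Finset (Fin n × Fin n)) \ univ.biUnion fun i => richPairs E e (D ∪ g i) t
  by_cases hB : LowerRegular ε (exposureDensity b lam) B
  · have hT2 : 2 * (#(univ : Finset (Fin n × Fin n)) : ℝ) ≤ gain * n ^ 2 * T := by
      rw [hcard, mul_right_comm]
      gcongr
    have hfail := half_le_failureCount (Good := LowerRegular ε (exposureDensity b lam))
      (R := fun G => richPairs E e (D ∪ G) t)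
      (fun _ _ hst hs => hs.mono hst) (by positivity) hround hT2 hB
    refine (subsetWeight_le_exp hp.le).trans ?_
    rw [hcard, ← Real.exp_nat_mul, ← Real.exp_add, Real.exp_le_exp]
    calc p * n ^ 2 ≤ (2 - b) * (p * n ^ 2) + T / 2 * (2 * b * (p * n ^ 2) / T) := by
          have : T / 2 * (2 * b * (p * n ^ 2) / T) = b * (p * n ^ 2) := by field_simp
          nlinarith [mul_pos hp (pow_pos hn' 2)]
      _ ≤ _ := by gcongr
  · refine le_trans (subsetWeight_mono hp.le ?_)
      ((subsetWeight_le_of_not_lowerRegular_exposureDensity hn hp hlam hε hb hB).trans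
        (le_mul_of_one_le_right (Real.exp_pos _).le
          (one_le_pow₀ (Real.one_le_exp (by positivity)))))
    rintro Y - hY
    refine ⟨?_, hY.card_sdiff_le ht hN fun uv huv => ?_⟩
    · have := hY.1 e (mem_insert_self _ _)
      rwa [pairGraph_union_of_notMem he hg] at this
    · obtain ⟨i, hi⟩ : ∃ i, uv ∈ richPairs E e (D ∪ g i) t := by
        simpa [B] using (mem_sdiff.1 huv).2
      exact richPairs_mono (union_subset_union_right (subset_biUnion_of_mem g (mem_univ i))) t hi

open Classical in
lemma sum_exp_pow_failureCount_le {Fail : Finset (Fin n × Fin n) → Finset (Slot k n) → Prop}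
    (R : Finset (Slot k n) → Finset (Fin n × Fin n)) (Q : Finset (Slot k n) → Prop) (hT : 0 < T)
    (hp : 0 ≤ p) (hTm : T ≤ p * n ^ 2)
    (hfail : ∀ B, subsetWeight (p / T) (E₀ ×ˢ univ) (Fail B) ≤
      Real.exp (-(2 * b * (p * n ^ 2) / T))) :
    ∑ g ∈ Fintype.piFinset fun _ : Fin T => {G ∈ (E₀ ×ˢ univ).powerset | Q G},
        (∏ i, (p / T) ^ #(g i)) *
          Real.exp (2 * b * (p * n ^ 2) / T) ^ failureCount Fail R T univ g ≤
      Real.exp ((#E₀ + 1) * (p * n ^ 2)) := by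
  have : (0 : ℝ) < T := Nat.cast_pos.2 hT
  have hW : ∑ G ∈ (E₀ ×ˢ univ).powerset with Q G, (p / T) ^ #G ≤
      Real.exp (#E₀ * (p * n ^ 2) / T) := by
    refine (subsetWeight_le_exp (by positivity)).trans_eq ?_
    rw [card_slots]
    congr 1
    ring
  have hφ : ∀ B, ∑ G ∈ {G ∈ (E₀ ×ˢ univ).powerset | Q G} with Fail B G, (p / T) ^ #G ≤
      Real.exp (-(2 * b * (p * n ^ 2) / T)) := by
    refine fun B => le_trans (sum_le_sum_of_subset_of_nonneg ?_ fun _ _ _ => by positivity)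
      (hfail B)
    exact filter_subset_filter _ (filter_subset _ _)
  refine (sum_prod_mul_pow_failureCount_le (fun G => by positivity) (Real.exp_pos _).le hW hφ T
    univ).trans ?_
  rw [← Real.exp_add, add_neg_cancel, Real.exp_zero]
  have hone : 1 ≤ Real.exp (#E₀ * (p * n ^ 2) / T) := Real.one_le_exp (by positivity)
  calc (Real.exp (#E₀ * (p * n ^ 2) / T) + 1) ^ T
      ≤ (Real.exp (#E₀ * (p * n ^ 2) / T) * Real.exp 1) ^ T := by
        gcongr
        nlinarith [Real.add_one_le_exp 1]
    _ = Real.exp (#E₀ * (p * n ^ 2) + T) := by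
        rw [← Real.exp_add, ← Real.exp_nat_mul]
        congr 1
        field_simp
    _ ≤ Real.exp ((#E₀ + 1) * (p * n ^ 2)) := by
        rw [Real.exp_le_exp]
        linarith

open Classical in
lemma pow_card_le_of_subsetWeight_copyPoor_ne_zero (he : e ∉ E₀) (hlam : 0 ≤ lam) (hp : 0 ≤ p)
    (hε : 0 ≤ ε)
    (hbig : 2 * (T * #E₀ * 4 ^ n : ℝ) ≤ Real.exp (lam * p * ε ^ 2 * n ^ 2 / (4 * T)))
    {X : Finset (Slot k n)}
    (hX0 : subsetWeight p univ (fun Y =>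
      CopyPoor E (insert e E₀) D ε (lam * p) N (X ∪ {e} ×ˢ Y)) ≠ 0) :
    (T : ℝ) ^ #X ≤ 2 * #{h : X → Fin T | ∀ i,
      LowerRegularOn E₀ ε (lam * p / (4 * T)) (colourClass h i)} := by
  refine pow_card_le_two_mul_card_lowerRegular_colouring hε (by positivity) (fun e' he' => ?_) hbig
  obtain ⟨Y, hY, -⟩ := exists_ne_zero_of_sum_ne_zero hX0
  convert (mem_filter.1 hY).2.1 e' (mem_insert_of_mem he') using 1
  have hne : e' ≠ e := ne_of_mem_of_not_mem he' he
  ext uv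
  simp [mem_pairGraph, hne.symm]

open Classical in
theorem subsetWeight_copyPoor_insert_le
    {Fail : Finset (Fin n × Fin n) → Finset (Slot k n) → Prop} {a : ℝ} (he : e ∉ E₀) (hn : 0 < n)
    (hT : 0 < T) (hp : 0 < p) (hlam : 0 < lam) (hε : 0 < ε) (hb : 0 ≤ b) (hab : a + #E₀ + 4 ≤ b)
    (ht : 0 < t) (hgain : 0 < gain) (hTgain : 2 ≤ gain * T) (hTm : T ≤ p * n ^ 2)
    (hbig : 2 * (T * #E₀ * 4 ^ n : ℝ) ≤ Real.exp (lam * p * ε ^ 2 * n ^ 2 / (4 * T)))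
    (hN : N ≤ lam * p / 2 * ε ^ 2 * n ^ 2 * t)
    (hround : ∀ B, LowerRegular ε (exposureDensity b lam) B → ∀ G ⊆ E₀ ×ˢ univ,
      LowerRegularOn E₀ ε (lam * p / (4 * T)) G → ¬ Fail B G →
        gain * n ^ 2 ≤ #(B ∩ richPairs E e (D ∪ G) t))
    (hfail : ∀ B, subsetWeight (p / T) (E₀ ×ˢ univ) (Fail B) ≤
      Real.exp (-(2 * b * (p * n ^ 2) / T))) :
    subsetWeight p (insert e E₀ ×ˢ univ) (CopyPoor E (insert e E₀) D ε (lam * p) N) ≤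
      Real.exp (-a * (p * n ^ 2)) := by
  have hT' : (1 : ℝ) ≤ T := Nat.one_le_cast.2 hT
  set Q : Finset (Slot k n) → Prop := LowerRegularOn E₀ ε (lam * p / (4 * T))
  set Φ : Finset (Slot k n) → ℝ := fun X => subsetWeight p univ fun Y =>
    CopyPoor E (insert e E₀) D ε (lam * p) N (X ∪ {e} ×ˢ Y)
  set 𝒢 := Fintype.piFinset fun _ : Fin T => {G ∈ (E₀ ×ˢ univ).powerset | Q G}
  set F : (Fin T → Finset (Slot k n)) → ℝ := fun g => Real.exp (2 * b * (p * n ^ 2) / T) ^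
    failureCount Fail (fun G => richPairs E e (D ∪ G) t) T univ g
  have hinner : ∀ g ∈ 𝒢, Φ (univ.biUnion g) ≤ Real.exp ((2 - b) * (p * n ^ 2)) * F g := by
    intro g hg
    have hgi : ∀ i, g i ⊆ E₀ ×ˢ univ ∧ Q (g i) := fun i => by
      simpa using Fintype.mem_piFinset.1 hg i
    exact subsetWeight_copyPoor_union_le he (biUnion_subset.2 fun i _ => (hgi i).1) hn hT hp hlam
      hε hb ht hgain hTgain hN fun B hB i => hround B hB _ (hgi i).1 (hgi i).2
  have hcolour : ∑ X ∈ (E₀ ×ˢ univ).powerset, (T * (p / T)) ^ #X * Φ X ≤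
      2 * ∑ g ∈ 𝒢, (∏ i, (p / T) ^ #(g i)) * Φ (univ.biUnion g) :=
    sum_mul_pow_card_le_of_colouring (by positivity) (fun _ => subsetWeight_nonneg hp.le)
      fun _ _ => pow_card_le_of_subsetWeight_copyPoor_ne_zero he hlam.le hp.le hε.le hbig
  have hsum : ∑ g ∈ 𝒢, (∏ i, (p / T) ^ #(g i)) * F g ≤ Real.exp ((#E₀ + 1) * (p * n ^ 2)) :=
    sum_exp_pow_failureCount_le _ Q hT hp.le hTm hfail
  rw [subsetWeight_insert_product he]
  rw [mul_div_cancel₀ p (by positivity)] at hcolour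
  calc ∑ X ∈ (E₀ ×ˢ univ).powerset, p ^ #X * Φ X
      ≤ 2 * ∑ g ∈ 𝒢, (∏ i, (p / T) ^ #(g i)) * (Real.exp ((2 - b) * (p * n ^ 2)) * F g) := by
        refine hcolour.trans ?_
        gcongr with g hg
        exact hinner g hg
    _ = 2 * Real.exp ((2 - b) * (p * n ^ 2)) * ∑ g ∈ 𝒢, (∏ i, (p / T) ^ #(g i)) * F g := by
        simp only [mul_left_comm _ (Real.exp ((2 - b) * (p * n ^ 2))), ← mul_sum, mul_assoc]
    _ ≤ Real.exp (p * n ^ 2) * Real.exp ((2 - b) * (p * n ^ 2)) *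
          Real.exp ((#E₀ + 1) * (p * n ^ 2)) := by
        gcongr
        linarith [Real.add_one_le_exp (p * (n : ℝ) ^ 2)]
    _ ≤ Real.exp (-a * (p * n ^ 2)) := by
        rw [← Real.exp_add, ← Real.exp_add, Real.exp_le_exp]
        nlinarith

end Step

section SparseEmbedding

variable {E E₀ : Finset (Fin k × Fin k)} {e : Fin k × Fin k} {D G : Finset (Slot k n)}
  {B : Finset (Fin n × Fin n)} {p q ε lam b c C γ : ℝ} {δ δ' : ℝ → ℝ}

/-- The sparse embedding statement for host graphs in which the pairs in `E₀` are sparse and those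
in `E \ E₀` form a dense background `D`: copy-poor graphs of density `p ≥ C * q` are exponentially
rare, where `q` is the threshold at which `E` becomes spread. -/
def SparseEmbedding (E E₀ : Finset (Fin k × Fin k)) (lam b : ℝ) (δ : ℝ → ℝ) (C ε γ : ℝ) : Prop :=
  ∀ (n : ℕ) (q p : ℝ), 0 < q → 1 ≤ q * n → (∀ e ∈ E, IsSpread n q (E.erase e) e) →
    C * q ≤ p → p ≤ 1 → ∀ D : Finset (Slot k n), (∀ s ∈ D, s.1 ∉ E₀) →
    (∀ e ∈ E \ E₀, LowerRegular ε δ (pairGraph D e)) →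
    subsetWeight p (E₀ ×ˢ univ) (CopyPoor E E₀ D ε (lam * p) (γ * n ^ k * p ^ #E₀)) ≤
      Real.exp (-b * (p * n ^ 2))

lemma pos_of_one_le_mul_natCast (h : 1 ≤ q * n) : 0 < n :=
  Nat.pos_of_ne_zero fun h0 => by norm_num [h0] at h

lemma exists_sparseEmbedding_empty (hE : ∀ e ∈ E, e.1 < e.2) (lam b : ℝ)
    (hδ : ∀ x, 0 < x → 0 < δ x) :
    ∃ ε γ : ℝ, 0 < ε ∧ 0 < γ ∧ SparseEmbedding E ∅ lam b δ 1 ε γ := by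
  obtain ⟨ε, γ, hε, hγ, h⟩ := exists_le_card_copies_of_lowerRegular δ hδ E hE
  refine ⟨ε, γ, hε, hγ, fun n q p _ hqn _ _ _ D _ hD => ?_⟩
  refine (subsetWeight_eq_zero fun G hG hpoor => ?_).trans_le (Real.exp_pos _).le
  obtain rfl : G = ∅ := by simpa using hG
  have hcopies := h n (pos_of_one_le_mul_natCast hqn) D (by simpa using hD)
  have := hpoor.2
  simp only [union_empty, card_empty, pow_zero, mul_one] at this
  linarith

lemma IsSpread.mono (h : IsSpread n q E e) (hE₀ : E₀ ⊆ E) (hq : 0 ≤ q) (hqp : q ≤ p)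
    (hp1 : p ≤ 1) : IsSpread n p E₀ e := by
  intro J h1 h2
  refine (h J h1 h2).trans (mul_le_mul_of_nonneg_left ?_ (by positivity))
  exact (pow_le_pow_left₀ hq hqp _).trans (pow_le_pow_of_le_one (hq.trans hqp) hp1
    (card_le_card (filter_subset_filter _ hE₀)))

lemma mul_sq_le_card_inter_richPairs (he : e ∈ E) (hE₀ : E₀ ⊆ E.erase e)
    (hD : ∀ s ∈ D, s.1 ∉ insert e E₀) (hn : 0 < n) (hp : 0 < p) (hε : 0 ≤ ε) (hc : 0 ≤ c)
    (hγ : 0 ≤ γ) {K : ℝ} (hK : 0 < K) {z : ℕ} (hz : (z : ℝ) ≤ c * ε ^ 2 * n ^ 2)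
    (hG : G ⊆ E₀ ×ˢ univ) (hreg : LowerRegularOn E₀ ε (2 * c) G)
    (hok : ¬ RoundFails E E₀ e D ε c (γ * n ^ k * p ^ #E₀) (K * secondMoment n k p #E₀) z B G) :
    γ ^ 2 / (4 * K * 2 ^ k) * n ^ 2 ≤
      #(B ∩ richPairs E e (D ∪ G) (γ * n ^ k * p ^ #E₀ / (2 * n ^ 2))) := by
  have : (0 : ℝ) < n := Nat.cast_pos.2 hn
  have h := sq_le_card_inter_richPairs he hE₀ hD hn hε hc (by positivity) hz hG hreg hok
  set r := #(B ∩ richPairs E e (D ∪ G) (γ * n ^ k * p ^ #E₀ / (2 * n ^ 2)))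
  have hpos : 0 < ((n : ℝ) ^ k * p ^ #E₀) ^ 2 := by positivity
  refine le_of_mul_le_mul_left ?_ hpos
  calc ((n : ℝ) ^ k * p ^ #E₀) ^ 2 * (γ ^ 2 / (4 * K * 2 ^ k) * n ^ 2)
      = (γ * n ^ k * p ^ #E₀) ^ 2 * (n ^ 2 / (4 * K * 2 ^ k)) := by ring
    _ ≤ 4 * (K * secondMoment n k p #E₀) * r * (n ^ 2 / (4 * K * 2 ^ k)) := by gcongr
    _ = ((n : ℝ) ^ k * p ^ #E₀) ^ 2 * r := by
        unfold secondMoment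
        field_simp

lemma SparseEmbedding.subsetWeight_roundFails_le
    (h : SparseEmbedding E E₀ lam b (fun x => min (δ x) (δ' x)) C ε γ) (he : e ∈ E)
    (heE₀ : e ∉ E₀) (hE₀ : E₀ ⊆ E) (hq : 0 < q) (hqn : 1 ≤ q * n)
    (hspread : ∀ e ∈ E, IsSpread n q (E.erase e) e) (hqp : q ≤ p) (hCp : C * q ≤ p) (hp1 : p ≤ 1)
    (hm : 1 ≤ p * n ^ 2) (hD : ∀ s ∈ D, s.1 ∉ insert e E₀)
    (hDreg : ∀ e' ∈ E \ insert e E₀, LowerRegular ε δ (pairGraph D e'))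
    {K : ℝ} (hK : 0 < K) {z : ℕ} (hz : K⁻¹ ^ z ≤ Real.exp (-b * (p * n ^ 2))) :
    subsetWeight p (E₀ ×ˢ univ) (fun G => LowerRegular ε δ' B ∧
        RoundFails E E₀ e D ε (lam * p) (γ * n ^ k * p ^ #E₀) (K * secondMoment n k p #E₀)
          (2 * #E₀ * z) B G) ≤
      Real.exp (-(b - #E₀ - 1) * (p * n ^ 2)) := by
  by_cases hB : LowerRegular ε δ' B
  swap
  · rw [subsetWeight_eq_zero fun _ _ hG => hB hG.1]
    positivity
  have hp : 0 < p := hq.trans_le hqp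
  refine (subsetWeight_mono hp.le fun G _ hG => hG.2).trans ?_
  have hE₀' : E₀ ⊆ E.erase e := subset_erase.2 ⟨hE₀, heE₀⟩
  refine _root_.subsetWeight_roundFails_le ((hspread e he).mono hE₀' hq.le hqp hp1)
    (pos_of_one_le_mul_natCast hqn) hp hp1 hm hK hz
    (h n q p hq hqn hspread hCp hp1 _ ?_ fun e' he' => ?_)
  · intro s hs
    rcases mem_union.1 hs with hs | hs
    · exact fun h' => hD s hs (mem_insert_of_mem h')
    · rwa [mem_singleton.1 (mem_product.1 hs).1]
  · obtain ⟨he'E, he'E₀⟩ := mem_sdiff.1 he'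
    rcases eq_or_ne e' e with rfl | hne
    · refine (hB.mono_density fun x => min_le_right _ _).mono fun uv huv => ?_
      simp [mem_pairGraph, huv]
    · have he'D : e' ∈ E \ insert e E₀ := by simp [he'E, he'E₀, hne]
      refine ((hDreg e' he'D).mono_density fun x => min_le_left _ _).mono fun uv huv => ?_
      exact mem_pairGraph.2 (mem_union_left _ (mem_pairGraph.1 huv))

lemma exists_nat_exp_inv_pow_le {ξ d x : ℝ} (hξ : 0 < ξ) (hd : 0 ≤ d) (hb : 0 ≤ b)
    (hx : 2 * d + 1 ≤ ξ * x) :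
    ∃ z : ℕ, 2 * d * z ≤ ξ * x ∧
      (Real.exp (b * (2 * (2 * d + 1)) / ξ))⁻¹ ^ z ≤ Real.exp (-b * x) := by
  set y := ξ * x / (2 * d + 1) with hy
  have hy1 : 1 ≤ y := by rwa [hy, one_le_div (by positivity)]
  have hfloor : (⌊y⌋₊ : ℝ) ≤ y := Nat.floor_le (by positivity)
  have hhalf : y / 2 ≤ ⌊y⌋₊ := by
    have : (1 : ℝ) ≤ ⌊y⌋₊ := Nat.one_le_cast.2 (Nat.one_le_floor_iff y |>.2 hy1)
    linarith [Nat.lt_floor_add_one y]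
  refine ⟨⌊y⌋₊, ?_, ?_⟩
  · rw [hy, le_div_iff₀ (by positivity), ← hy] at hfloor
    nlinarith [Nat.cast_nonneg (α := ℝ) ⌊y⌋₊]
  · rw [← Real.exp_neg, ← Real.exp_nat_mul, Real.exp_le_exp]
    have hxy : b * x = y / 2 * (b * (2 * (2 * d + 1)) / ξ) := by
      rw [hy]
      field_simp
    have := mul_le_mul_of_nonneg_right hhalf (by positivity : 0 ≤ b * (2 * (2 * d + 1)) / ξ)
    linarith

lemma two_mul_mul_four_pow_le_exp {s : ℝ} (hs : 0 ≤ s) (hn : 0 < n) :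
    2 * (s * 4 ^ n) ≤ Real.exp ((2 * s + 4) * n) := by
  have hn1 : (1 : ℝ) ≤ n := Nat.one_le_cast.2 hn
  have h2 : 2 * s ≤ Real.exp (2 * s * n) := by nlinarith [Real.add_one_le_exp (2 * s * n)]
  have h4 : (4 : ℝ) ^ n ≤ Real.exp (n * 4) := by
    rw [Real.exp_nat_mul]
    gcongr
    linarith [Real.add_one_le_exp 4]
  calc 2 * (s * 4 ^ n) = 2 * s * 4 ^ n := by ring
    _ ≤ Real.exp (2 * s * n) * Real.exp (n * 4) := by gcongr
    _ = Real.exp ((2 * s + 4) * n) := by rw [← Real.exp_add]; ring_nf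

theorem SparseEmbedding.subsetWeight_copyPoor_insert_le (he : e ∈ E) (heE₀ : e ∉ E₀)
    (hE₀ : E₀ ⊆ E) (hlam : 0 < lam) (hb : 0 ≤ b) (hε : 0 < ε) (hγ : 0 < γ) {b₁ ξ K : ℝ} {T : ℕ}
    (hb₁ : b₁ = 2 * (b + #E₀ + 4) + #E₀ + 1) (hξ : ξ = lam / 8 * ε ^ 2)
    (hK : K = Real.exp (b₁ * (2 * (2 * #E₀ + 1)) / ξ))
    (h : SparseEmbedding E E₀ (lam / 8) b₁
      (fun x => min (δ x) (exposureDensity (b + #E₀ + 4) lam x)) C ε γ)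
    (hT : 1 ≤ T) (hTgain : 2 ≤ γ ^ 2 / (4 * K * 2 ^ k) * T) (hq : 0 < q) (hqn : 1 ≤ q * n)
    (hspread : ∀ e ∈ E, IsSpread n q (E.erase e) e) (hqp : q ≤ p / T) (hCp : C * q ≤ p / T)
    (hp1 : p ≤ 1) (hTm : T ≤ p * n ^ 2) (hdel : 2 * #E₀ + 1 ≤ ξ * (p / T * n ^ 2))
    (hbig : (2 * (T * #E₀) + 4) * n ≤ lam * p * ε ^ 2 * n ^ 2 / (4 * T))
    (hD : ∀ s ∈ D, s.1 ∉ insert e E₀)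
    (hDreg : ∀ e' ∈ E \ insert e E₀, LowerRegular ε δ (pairGraph D e')) :
    subsetWeight p (insert e E₀ ×ˢ univ) (CopyPoor E (insert e E₀) D ε (lam * p)
      (lam / 4 * ε ^ 2 * γ / T ^ #E₀ * n ^ k * p ^ (#E₀ + 1))) ≤ Real.exp (-b * (p * n ^ 2)) := by
  have hn : 0 < n := pos_of_one_le_mul_natCast hqn
  have : (0 : ℝ) < n := Nat.cast_pos.2 hn
  have hT' : (1 : ℝ) ≤ T := Nat.one_le_cast.2 hT
  have hp : 0 < p := (div_pos_iff_of_pos_right (by positivity)).1 (hq.trans_le hqp)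
  have hK0 : 0 < K := hK ▸ Real.exp_pos _
  have hb₁0 : 0 ≤ b₁ := by rw [hb₁]; positivity
  obtain ⟨z, hz, hKz⟩ := exists_nat_exp_inv_pow_le (hξ ▸ by positivity : 0 < ξ)
    (Nat.cast_nonneg #E₀) hb₁0 hdel
  rw [← hK] at hKz
  set N := γ * n ^ k * (p / T) ^ #E₀
  set Fail : Finset (Fin n × Fin n) → Finset (Slot k n) → Prop := fun B G =>
    LowerRegular ε (exposureDensity (b + #E₀ + 4) lam) B ∧
      RoundFails E E₀ e D ε (lam / 8 * (p / T)) N (K * secondMoment n k (p / T) #E₀)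
        (2 * #E₀ * z) B G
  refine _root_.subsetWeight_copyPoor_insert_le (Fail := Fail) (b := b + #E₀ + 4)
    (t := N / (2 * n ^ 2)) heE₀ hn hT hp hlam hε (by positivity) le_rfl (by positivity)
    (by positivity) hTgain hTm ?_ ?_ ?_ ?_
  · exact (two_mul_mul_four_pow_le_exp (by positivity) hn).trans (Real.exp_le_exp.2 hbig)
  · apply le_of_eq
    simp only [N, div_pow]
    field_simp
    ring
  · intro B hB G hG hreg hfail
    refine mul_sq_le_card_inter_richPairs he (subset_erase.2 ⟨hE₀, heE₀⟩) hD hn (by positivity)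
      hε.le (by positivity) hγ.le hK0 ?_ hG ?_ fun hfail' => hfail ⟨hB, hfail'⟩
    · push_cast
      exact hz.trans_eq (by rw [hξ]; ring)
    · convert hreg using 1
      ring
  · refine fun B => (h.subsetWeight_roundFails_le he heE₀ hE₀ hq hqn hspread hqp hCp
      ((div_le_self hp.le hT').trans hp1) ?_ hD hDreg hK0 hKz).trans_eq ?_
    · rwa [div_mul_eq_mul_div, one_le_div (by positivity)]
    · rw [hb₁]
      ring_nf

theorem SparseEmbedding.exists_insert (he : e ∈ E) (heE₀ : e ∉ E₀) (hE₀ : E₀ ⊆ E) (hlam : 0 < lam)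
    (hb : 0 ≤ b) (hC : 0 ≤ C) (hε : 0 < ε) (hγ : 0 < γ)
    (h : SparseEmbedding E E₀ (lam / 8) (2 * (b + #E₀ + 4) + #E₀ + 1)
      (fun x => min (δ x) (exposureDensity (b + #E₀ + 4) lam x)) C ε γ) :
    ∃ C' γ' : ℝ, 0 < C' ∧ 0 < γ' ∧ SparseEmbedding E (insert e E₀) lam b δ C' ε γ' := by
  set d := (#E₀ : ℝ)
  set b₁ := 2 * (b + d + 4) + d + 1 with hb₁
  set ξ := lam / 8 * ε ^ 2 with hξ_def
  set K := Real.exp (b₁ * (2 * (2 * d + 1)) / ξ) with hK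
  have hξ : 0 < ξ := by positivity
  have hgain : 0 < γ ^ 2 / (4 * K * 2 ^ k) := by positivity
  obtain ⟨T, hT⟩ : ∃ T : ℕ, 2 / (γ ^ 2 / (4 * K * 2 ^ k)) < T := exists_nat_gt _
  have hT0 : (0 : ℝ) < T := lt_trans (by positivity) hT
  have hT1 : (1 : ℝ) ≤ T := Nat.one_le_cast.2 (Nat.cast_pos.1 hT0)
  set L₁ := T * (2 * d + 1) / ξ
  set L₂ := (2 * (T * d) + 4) * (4 * T) / (lam * ε ^ 2)
  have hL₁ : 0 ≤ L₁ := by positivity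
  have hL₂ : 0 ≤ L₂ := by positivity
  refine ⟨T * C + T + L₁ + L₂, lam / 4 * ε ^ 2 * γ / T ^ #E₀, by positivity,
    by positivity, fun n q p hq hqn hspread hCp hp1 D hD hDreg => ?_⟩
  have hn1 : (1 : ℝ) ≤ n := Nat.one_le_cast.2 (pos_of_one_le_mul_natCast hqn)
  have hTC : 0 ≤ T * C := by positivity
  have hpn : (T * C + T + L₁ + L₂) * n ≤ p * n ^ 2 := by
    calc (T * C + T + L₁ + L₂) * n ≤ (T * C + T + L₁ + L₂) * n * (q * n) :=
          le_mul_of_one_le_right (by positivity) hqn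
      _ = (T * C + T + L₁ + L₂) * q * n ^ 2 := by ring
      _ ≤ p * n ^ 2 := by gcongr
  rw [card_insert_of_notMem heE₀]
  refine h.subsetWeight_copyPoor_insert_le he heE₀ hE₀ hlam hb hε hγ hb₁ hξ_def hK
    (Nat.cast_pos.1 hT0) ((div_lt_iff₀' hgain).1 hT).le hq hqn hspread ?_ ?_ hp1 ?_ ?_ ?_ hD hDreg
  · rw [le_div_iff₀ hT0]
    nlinarith
  · rw [le_div_iff₀ hT0]
    nlinarith
  · nlinarith
  · have : L₁ ≤ p * n ^ 2 := by nlinarith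
    rw [div_le_iff₀ hξ] at this
    rw [div_mul_eq_mul_div, ← mul_div_assoc, le_div_iff₀ hT0]
    linarith
  · have : L₂ * n ≤ p * n ^ 2 := by nlinarith
    rw [div_mul_eq_mul_div, div_le_iff₀ (by positivity)] at this
    rw [le_div_iff₀ (by positivity)]
    linarith

theorem exists_sparseEmbedding (hE : ∀ e ∈ E, e.1 < e.2) (hE₀ : E₀ ⊆ E) (hlam : 0 < lam)
    (hb : 0 ≤ b) (hδ : ∀ x, 0 < x → 0 < δ x) :
    ∃ C ε γ : ℝ, 0 < C ∧ 0 < ε ∧ 0 < γ ∧ SparseEmbedding E E₀ lam b δ C ε γ := by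
  induction E₀ using Finset.induction_on generalizing lam b δ with
  | empty =>
    obtain ⟨ε, γ, hε, hγ, h⟩ := exists_sparseEmbedding_empty hE lam b hδ
    exact ⟨1, ε, γ, one_pos, hε, hγ, h⟩
  | insert e E₀ heE₀ ih =>
    obtain ⟨he, hE₀⟩ := insert_subset_iff.1 hE₀
    obtain ⟨C, ε, γ, hC, hε, hγ, h⟩ := ih hE₀ (lam := lam / 8) (by positivity)
      (b := 2 * (b + #E₀ + 4) + #E₀ + 1) (by positivity)
      (δ := fun x => min (δ x) (exposureDensity (b + #E₀ + 4) lam x))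
      fun x hx => lt_min (hδ x hx) (Real.exp_pos _)
    obtain ⟨C', γ', hC', hγ', h'⟩ := h.exists_insert he heE₀ hE₀ hlam hb hC.le hε hγ
    exact ⟨C', ε, γ', hC', hε, hγ', h'⟩

end SparseEmbedding

section Translation

variable {H : SimpleGraph (Fin k)} {G G' : SimpleGraph (Fin k × Fin n)} {e : Fin k × Fin k}
  {s : Slot k n} {m : ℕ}

open Classical in
/-- The edges `ij` of `H`, each represented by the ordered pair with `i < j`. -/
noncomputable def orientedEdges (H : SimpleGraph (Fin k)) : Finset (Fin k × Fin k) :=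
  {e | e.1 < e.2 ∧ H.Adj e.1 e.2}

lemma mem_orientedEdges : e ∈ orientedEdges H ↔ e.1 < e.2 ∧ H.Adj e.1 e.2 := by
  simp [orientedEdges]

lemma mem_or_swap_mem_orientedEdges {i j : Fin k} (h : H.Adj i j) :
    (i, j) ∈ orientedEdges H ∨ (j, i) ∈ orientedEdges H :=
  h.ne.lt_or_gt.imp (fun hij => mem_orientedEdges.2 ⟨hij, h⟩)
    fun hij => mem_orientedEdges.2 ⟨hij, h.symm⟩

lemma injOn_sym2Mk_of_lt {α β : Type*} [Preorder α] {f : β → α} :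
    Set.InjOn (fun e : β × β => s(e.1, e.2)) {e | f e.1 < f e.2} := by
  rintro ⟨a, b⟩ hab ⟨c, d⟩ hcd h
  rcases Sym2.eq_iff.1 h with ⟨hac, hbd⟩ | ⟨had, hbc⟩
  · exact Prod.ext hac hbd
  · dsimp only at had hbc
    subst had hbc
    exact absurd hab (not_lt_of_gt hcd)

lemma edgeCount_eq_card_orientedEdges (H : SimpleGraph (Fin k)) :
    edgeCount H = #(orientedEdges H) := by
  have himage : H.edgeSet = (fun e : Fin k × Fin k => s(e.1, e.2)) '' ↑(orientedEdges H) := by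
    ext x
    induction x using Sym2.ind with
    | _ i j =>
      simp only [SimpleGraph.mem_edgeSet, Set.mem_image, mem_coe]
      constructor
      · intro h
        rcases mem_or_swap_mem_orientedEdges h with h | h
        · exact ⟨_, h, rfl⟩
        · exact ⟨_, h, Sym2.eq_swap⟩
      · rintro ⟨e, he, h⟩
        rw [← SimpleGraph.mem_edgeSet, ← h]
        exact (mem_orientedEdges.1 he).2
  have hinj := (injOn_sym2Mk_of_lt (α := Fin k) (f := id)).mono
    fun e (he : e ∈ orientedEdges H) => (mem_orientedEdges.1 he).1
  rw [edgeCount, Nat.card_coe_set_eq, himage, hinj.ncard_image, Set.ncard_coe_finset]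

open Classical in
/-- The edges of a subgraph of `K_n^H`, as a set of slots. -/
noncomputable def slotSet (H : SimpleGraph (Fin k)) (G : SimpleGraph (Fin k × Fin n)) :
    Finset (Slot k n) :=
  {s ∈ orientedEdges H ×ˢ univ | G.Adj (s.1.1, s.2.1) (s.1.2, s.2.2)}

lemma mem_slotSet :
    s ∈ slotSet H G ↔ s.1 ∈ orientedEdges H ∧ G.Adj (s.1.1, s.2.1) (s.1.2, s.2.2) := by
  simp [slotSet]

lemma slotSet_subset : slotSet H G ⊆ orientedEdges H ×ˢ univ := fun _ hs =>
  mem_product.2 ⟨(mem_slotSet.1 hs).1, mem_univ _⟩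

lemma slotSet_mono (h : G ≤ G') : slotSet H G ⊆ slotSet H G' := fun _ hs =>
  mem_slotSet.2 ⟨(mem_slotSet.1 hs).1, h (mem_slotSet.1 hs).2⟩

lemma le_of_slotSet_subset (hG : IsSubgraphKnH H G) (h : slotSet H G ⊆ slotSet H G') :
    G ≤ G' := by
  intro x y hxy
  rcases mem_or_swap_mem_orientedEdges (hG hxy) with he | he
  · have hs : ((x.1, y.1), (x.2, y.2)) ∈ slotSet H G := mem_slotSet.2 ⟨he, hxy⟩
    exact (mem_slotSet.1 (h hs)).2
  · have hs : ((y.1, x.1), (y.2, x.2)) ∈ slotSet H G := mem_slotSet.2 ⟨he, hxy.symm⟩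
    exact (mem_slotSet.1 (h hs)).2.symm

lemma slotSet_injOn : Set.InjOn (slotSet H) {G : SimpleGraph (Fin k × Fin n) | IsSubgraphKnH H G} :=
  fun _ hG _ hG' h =>
    (le_of_slotSet_subset hG h.subset).antisymm (le_of_slotSet_subset hG' h.superset)

lemma pairCountIn_eq_card (he : e ∈ orientedEdges H) (A B : Finset (Fin n)) :
    pairCountIn G e.1 e.2 A B = #(pairGraph (slotSet H G) e ∩ A ×ˢ B) := by
  classical
  rw [pairCountIn, Nat.card_eq_fintype_card, Fintype.card_subtype]
  congr 1
  ext uv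
  simp only [mem_filter, mem_univ, true_and, mem_inter, mem_pairGraph, mem_slotSet, he,
    mem_product]
  tauto

lemma pairCount_eq_card (he : e ∈ orientedEdges H) :
    pairCount G e.1 e.2 = #(pairGraph (slotSet H G) e) := by
  rw [← inter_univ (pairGraph _ e), ← univ_product_univ, ← pairCountIn_eq_card he]
  simp [pairCount, pairCountIn]

lemma MemFamily.card_pairGraph (hG : MemFamily H m G) (he : e ∈ orientedEdges H) :
    #(pairGraph (slotSet H G) e) = m := by
  rw [← pairCount_eq_card he, hG.2 _ _ (mem_orientedEdges.1 he).2]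

lemma MemFamily.card_slotSet (hG : MemFamily H m G) : #(slotSet H G) = edgeCount H * m := by
  rw [edgeCount_eq_card_orientedEdges, card_eq_sum_card_fiberwise (f := Prod.fst)
    (t := orientedEdges H) fun s hs => (mem_slotSet.1 hs).1]
  refine sum_const_nat fun e he => ?_
  rw [← hG.card_pairGraph he]
  refine card_nbij' Prod.snd (Prod.mk e) ?_ ?_ ?_ ?_
  · rintro s hs'
    obtain ⟨hs, rfl⟩ := mem_filter.1 (mem_coe.1 hs')
    exact mem_pairGraph.2 hs
  · exact fun uv huv => mem_filter.2 ⟨mem_pairGraph.1 huv, rfl⟩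
  · rintro s hs
    obtain ⟨-, rfl⟩ := mem_filter.1 hs
    rfl
  · exact fun _ _ => rfl

lemma copyCount_eq_card (H : SimpleGraph (Fin k)) (G : SimpleGraph (Fin k × Fin n)) :
    copyCount H G = #(copies (orientedEdges H) (slotSet H G)) := by
  classical
  rw [copyCount, Nat.card_eq_fintype_card, Fintype.card_subtype]
  congr 1
  ext f
  simp only [mem_filter, mem_univ, true_and, mem_copies]
  constructor
  · exact fun h e he => mem_slotSet.2 ⟨he, h (mem_orientedEdges.1 he).2⟩
  · intro h i j hij
    rcases mem_or_swap_mem_orientedEdges hij with he | he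
    · exact (mem_slotSet.1 (h _ he)).2
    · exact (mem_slotSet.1 (h _ he)).2.symm

lemma card_slotSet_sdiff_deleteEdges_le (H : SimpleGraph (Fin k)) (G : SimpleGraph (Fin k × Fin n))
    (X : Set (Sym2 (Fin k × Fin n))) :
    #(slotSet H G \ slotSet H (G.deleteEdges X)) ≤ X.ncard := by
  rw [← Set.ncard_coe_finset]
  refine Set.ncard_le_ncard_of_injOn (fun s : Slot k n => s((s.1.1, s.2.1), (s.1.2, s.2.2))) ?_ ?_
    X.toFinite
  · intro s hs
    simp only [coe_sdiff, Set.mem_sdiff, mem_coe, mem_slotSet, SimpleGraph.deleteEdges_adj] at hs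
    by_contra h
    exact hs.2 ⟨hs.1.1, hs.1.2, h⟩
  · intro s hs s' hs' h
    have heq := injOn_sym2Mk_of_lt (f := Prod.fst) (x₁ := ((s.1.1, s.2.1), (s.1.2, s.2.2)))
      (x₂ := ((s'.1.1, s'.2.1), (s'.1.2, s'.2.2)))
      (mem_orientedEdges.1 (mem_slotSet.1 (mem_sdiff.1 hs).1).1).1
      (mem_orientedEdges.1 (mem_slotSet.1 (mem_sdiff.1 hs').1).1).1 h
    simp only [Prod.mk.injEq] at heq
    exact Prod.ext (Prod.ext heq.1.1 heq.2.1) (Prod.ext heq.1.2 heq.2.2)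

lemma card_pairGraph_sdiff_le (D D' : Finset (Slot k n)) (e : Fin k × Fin k) :
    #(pairGraph D e \ pairGraph D' e) ≤ #(D \ D') :=
  card_le_card_of_injOn (Prod.mk e)
    (fun uv huv => by simpa [mem_pairGraph] using huv) (Prod.mk_right_injective e).injOn

lemma LowerRegularPair.lowerRegular {ε lam : ℝ} (h : LowerRegularPair ε lam G e.1 e.2)
    (hG : MemFamily H m G) (he : e ∈ orientedEdges H) :
    LowerRegular ε (fun _ => lam * (m / n ^ 2)) (pairGraph (slotSet H G) e) := by
  refine lowerRegular_const_iff.2 fun A B hA hB => ?_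
  have hAB := h A B hA hB
  simp only [density, pairCountIn_eq_card he, univ_product_univ, inter_univ,
    hG.card_pairGraph he, card_univ, Fintype.card_fin, ← sq] at hAB
  rcases (by positivity : (0 : ℝ) ≤ #A * #B).eq_or_lt with h0 | h0
  · simp [← h0]
  · rwa [le_div_iff₀ h0] at hAB

end Translation

section TwoDensity

variable {H : SimpleGraph (Fin k)} {J : Finset (Fin k)} {e : Fin k × Fin k}

lemma div_le_twoDensity {H' : SimpleGraph (Fin k)} (hle : H' ≤ H)
    (hJ : ∀ ⦃x y⦄, H'.Adj x y → x ∈ J ∧ y ∈ J) (hcard : 2 < #J) :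
    ((edgeCount H' : ℝ) - 1) / ((#J : ℝ) - 2) ≤ twoDensity H := by
  refine le_csSup (Set.Finite.bddAbove ?_) ⟨J, H', hle, hJ, hcard, rfl⟩
  refine (Set.finite_range fun x : Finset (Fin k) × SimpleGraph (Fin k) =>
    ((edgeCount x.2 : ℝ) - 1) / ((#x.1 : ℝ) - 2)).subset ?_
  rintro _ ⟨V, K, -, -, -, rfl⟩
  exact ⟨(V, K), rfl⟩

lemma card_filter_orientedEdges_sub_one_div_le_twoDensity (hcard : 2 < #J) :
    ((#{e ∈ orientedEdges H | e.1 ∈ J ∧ e.2 ∈ J} : ℝ) - 1) / ((#J : ℝ) - 2) ≤ twoDensity H := by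
  have h := div_le_twoDensity (SimpleGraph.spanningCoe_induce_le H (J : Set (Fin k)))
    (by simp +contextual) hcard
  rw [edgeCount_eq_card_orientedEdges] at h
  convert h using 5
  ext e
  simp [mem_orientedEdges, and_assoc]

lemma one_le_twoDensity {a b c : Fin k} (hab : H.Adj a b) (hac : H.Adj a c) (hbc : b ≠ c) :
    1 ≤ twoDensity H := by
  set J : Finset (Fin k) := {a, b, c} with hJ
  have hcard : #J = 3 := card_eq_three.2 ⟨a, b, c, hab.ne, hac.ne, hbc, rfl⟩
  have hsub : {s(a, b), s(a, c)} ⊆ (H.induce (J : Set (Fin k))).spanningCoe.edgeSet := by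
    rintro _ (rfl | rfl) <;> simp [hJ, hab, hac]
  have htwo : 2 ≤ edgeCount (H.induce (J : Set (Fin k))).spanningCoe := by
    have hne : s(a, b) ≠ s(a, c) := fun h => hbc (Sym2.congr_right.1 h)
    rw [edgeCount, Nat.card_coe_set_eq, ← Set.ncard_pair hne]
    exact Set.ncard_le_ncard hsub (Set.toFinite _)
  refine le_trans ?_ (div_le_twoDensity (J := J) (SimpleGraph.spanningCoe_induce_le H J)
    (by simp +contextual) (by omega))
  have htwo' : (2 : ℝ) ≤ edgeCount (H.induce (J : Set (Fin k))).spanningCoe := by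
    exact_mod_cast htwo
  rw [hcard, one_le_div (by norm_num)]
  norm_num
  linarith

lemma eq_of_mem_pair_of_lt {α : Type*} [LinearOrder α] {a b c d : α} (hab : a < b) (hcd : c < d)
    (hc : c ∈ ({a, b} : Finset α)) (hd : d ∈ ({a, b} : Finset α)) : c = a ∧ d = b := by
  simp only [mem_insert, mem_singleton] at hc hd
  rcases hc with rfl | rfl <;> rcases hd with rfl | rfl
  · exact absurd hcd (lt_irrefl _)
  · exact ⟨rfl, rfl⟩
  · exact absurd hab hcd.not_gt
  · exact absurd hcd (lt_irrefl _)

lemma isSpread_rpow_neg_inv_twoDensity (hH : 1 ≤ twoDensity H) (hn : 1 ≤ n)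
    (he : e ∈ orientedEdges H) :
    IsSpread n ((n : ℝ) ^ (-(1 / twoDensity H))) ((orientedEdges H).erase e) e := by
  intro J h₁ h₂
  have hlt := (mem_orientedEdges.1 he).1
  have hn1 : (1 : ℝ) ≤ n := by exact_mod_cast hn
  have hn0 : (0 : ℝ) < n := by linarith
  have hpair : ({e.1, e.2} : Finset (Fin k)) ⊆ J := by simp [insert_subset_iff, h₁, h₂]
  have htwo : 2 ≤ #J := card_pair hlt.ne ▸ card_le_card hpair
  rw [filter_erase]
  set S := {f ∈ orientedEdges H | f.1 ∈ J ∧ f.2 ∈ J}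
  have heS : e ∈ S := mem_filter.2 ⟨he, h₁, h₂⟩
  rcases htwo.eq_or_lt with hcard | hcard
  · have hJ : {e.1, e.2} = J := eq_of_subset_of_card_le hpair (by rw [card_pair hlt.ne, hcard])
    have hempty : S.erase e = ∅ := by
      refine eq_empty_of_forall_notMem fun f hf => (mem_erase.1 hf).1 ?_
      obtain ⟨hfE, hf₁, hf₂⟩ := mem_filter.1 (mem_erase.1 hf).2
      rw [← hJ] at hf₁ hf₂
      exact Prod.ext_iff.2 (eq_of_mem_pair_of_lt hlt (mem_orientedEdges.1 hfE).1 hf₁ hf₂)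
    rw [hempty, ← hcard]
    simp
  · have hJpos : (0 : ℝ) < #J - 2 := by
      have : (2 : ℝ) < #J := by exact_mod_cast hcard
      linarith
    have hdens := card_filter_orientedEdges_sub_one_div_le_twoDensity (H := H) hcard
    rw [div_le_iff₀ hJpos, ← inv_mul_le_iff₀ (by linarith), ← one_div] at hdens
    have hcast : (#(S.erase e) : ℝ) = #S - 1 := by rw [cast_card_erase_of_mem heS]
    rw [← Real.rpow_natCast (_ ^ _), ← Real.rpow_mul hn0.le, ← Real.rpow_natCast _ #J,
      ← Real.rpow_add hn0, ← Real.rpow_natCast, hcast]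
    refine Real.rpow_le_rpow_of_exponent_le hn1 ?_
    push_cast
    linarith

end TwoDensity

section Matching

variable {H : SimpleGraph (Fin k)} {E : Finset (Fin k × Fin k)} {e : Fin k × Fin k}

/-- `f` with the values at the ends of `e` replaced by the ends of `uv`. -/
def updatePair (f : Fin k → Fin n) (e : Fin k × Fin k) (uv : Fin n × Fin n) : Fin k → Fin n :=
  Function.update (Function.update f e.1 uv.1) e.2 uv.2

lemma map_updatePair_self (f : Fin k → Fin n) (uv : Fin n × Fin n) (he : e.1 ≠ e.2) :
    Prod.map (updatePair f e uv) (updatePair f e uv) e = uv := by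
  simp [updatePair, Prod.ext_iff, Function.update_of_ne he]

lemma updatePair_of_ne (f : Fin k → Fin n) (uv : Fin n × Fin n) {i : Fin k} (h₁ : i ≠ e.1)
    (h₂ : i ≠ e.2) : updatePair f e uv i = f i := by
  simp [updatePair, h₁, h₂]

lemma card_pairGraph_mul_card_copies_le (D : Finset (Slot k n)) (he : e.1 ≠ e.2)
    (hdisj : ∀ f ∈ E, Disjoint ({e.1, e.2} : Finset (Fin k)) {f.1, f.2}) :
    #(pairGraph D e) * #(copies E D) ≤ #(copies (insert e E) D) * n ^ 2 := by
  have hsq : n ^ 2 = #(univ : Finset (Fin n × Fin n)) := by simp [sq]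
  rw [hsq, ← card_product, ← card_product]
  refine card_le_card_of_injOn (fun x => (updatePair x.2 e x.1, Prod.map x.2 x.2 e)) ?_ ?_
  · rintro ⟨uv, f⟩ hx
    obtain ⟨huv, hf⟩ := mem_product.1 (mem_coe.1 hx)
    refine mem_product.2 ⟨mem_copies.2 fun e' he' => ?_, mem_univ _⟩
    rcases mem_insert.1 he' with rfl | he'
    · rw [map_updatePair_self f uv he]
      exact mem_pairGraph.1 huv
    · have hd := hdisj e' he'
      simp only [disjoint_insert_left, disjoint_singleton_left, mem_insert, mem_singleton,
        not_or] at hd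
      convert mem_copies.1 hf e' he' using 2
      exact Prod.ext (updatePair_of_ne f uv (Ne.symm hd.1.1) (Ne.symm hd.2.1))
        (updatePair_of_ne f uv (Ne.symm hd.1.2) (Ne.symm hd.2.2))
  · rintro ⟨uv, f⟩ - ⟨uv', f'⟩ - hx
    obtain ⟨hupd, hends⟩ := Prod.mk.inj hx
    have huv : uv = uv' := by
      rw [← map_updatePair_self f uv he, ← map_updatePair_self f' uv' he, hupd]
    refine Prod.ext huv (funext fun i => ?_)
    by_cases h₁ : i = e.1
    · rw [h₁]; exact congrArg Prod.fst hends
    by_cases h₂ : i = e.2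
    · rw [h₂]; exact congrArg Prod.snd hends
    calc f i = updatePair f e uv i := (updatePair_of_ne f uv h₁ h₂).symm
      _ = updatePair f' e uv' i := congrFun hupd i
      _ = f' i := updatePair_of_ne f' uv' h₁ h₂

lemma pow_mul_prod_card_pairGraph_le (D : Finset (Slot k n)) (hE : ∀ e ∈ E, e.1 ≠ e.2)
    (hdisj : (E : Set (Fin k × Fin k)).PairwiseDisjoint fun e => ({e.1, e.2} : Finset (Fin k))) :
    n ^ k * ∏ e ∈ E, #(pairGraph D e) ≤ #(copies E D) * n ^ (2 * #E) := by
  induction E using Finset.induction_on with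
  | empty => simp [copies, copySlots]
  | insert e E he ih =>
    rw [coe_insert] at hdisj
    have hE' := ih (fun f hf => hE f (mem_insert_of_mem hf)) (hdisj.subset (Set.subset_insert _ _))
    have hstep := card_pairGraph_mul_card_copies_le D (hE e (mem_insert_self e E)) fun f hf =>
      hdisj (Set.mem_insert _ _) (Set.mem_insert_of_mem _ hf) (ne_of_mem_of_not_mem hf he).symm
    rw [prod_insert he, card_insert_of_notMem he]
    calc n ^ k * (#(pairGraph D e) * ∏ f ∈ E, #(pairGraph D f))
        = #(pairGraph D e) * (n ^ k * ∏ f ∈ E, #(pairGraph D f)) := by ring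
      _ ≤ #(pairGraph D e) * (#(copies E D) * n ^ (2 * #E)) := by gcongr
      _ = #(pairGraph D e) * #(copies E D) * n ^ (2 * #E) := by ring
      _ ≤ #(copies (insert e E) D) * n ^ 2 * n ^ (2 * #E) := by gcongr
      _ = #(copies (insert e E) D) * n ^ (2 * (#E + 1)) := by ring

lemma pairwiseDisjoint_orientedEdges (hH : ∀ a b c, H.Adj a b → H.Adj a c → b = c) :
    (orientedEdges H : Set (Fin k × Fin k)).PairwiseDisjoint
      fun e => ({e.1, e.2} : Finset (Fin k)) := by
  rintro ⟨a, b⟩ hab ⟨c, d⟩ hcd hne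
  obtain ⟨hlt, hab⟩ := mem_orientedEdges.1 hab
  obtain ⟨hlt', hcd⟩ := mem_orientedEdges.1 hcd
  refine disjoint_left.2 fun i hi hi' => hne ?_
  simp only [mem_insert, mem_singleton] at hi hi'
  rcases hi with rfl | rfl <;> rcases hi' with rfl | rfl
  · exact Prod.ext rfl (hH _ _ _ hab hcd)
  · obtain rfl := hH _ _ _ hab hcd.symm
    exact absurd hlt hlt'.not_gt
  · obtain rfl := hH _ _ _ hab.symm hcd
    exact absurd hlt hlt'.not_gt
  · exact Prod.ext (hH _ _ _ hab.symm hcd.symm) rfl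

lemma MemFamily.le_copyCount_deleteEdges {m : ℕ} {G : SimpleGraph (Fin k × Fin n)}
    (hG : MemFamily H m G) (hH : ∀ a b c, H.Adj a b → H.Adj a c → b = c)
    {X : Set (Sym2 (Fin k × Fin n))} {ξ : ℝ} (hξ : ξ ≤ 1) (hX : (X.ncard : ℝ) ≤ ξ * m) :
    (1 - ξ) ^ edgeCount H * (n : ℝ) ^ k * ((m : ℝ) / (n : ℝ) ^ 2) ^ edgeCount H ≤
      copyCount H (G.deleteEdges X) := by
  set D := slotSet H (G.deleteEdges X)
  have hpair : ∀ e ∈ orientedEdges H, (1 - ξ) * m ≤ #(pairGraph D e) := by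
    intro e he
    have hlost : #(pairGraph (slotSet H G) e \ pairGraph D e) ≤ X.ncard :=
      (card_pairGraph_sdiff_le _ _ e).trans (card_slotSet_sdiff_deleteEdges_le H G X)
    have hle : m ≤ #(pairGraph D e) + X.ncard := by
      rw [← hG.card_pairGraph he, ← Nat.sub_le_iff_le_add']
      exact (le_card_sdiff _ _).trans hlost
    have hle' : (m : ℝ) ≤ #(pairGraph D e) + X.ncard := by exact_mod_cast hle
    linarith
  have hprod : ((1 - ξ) * m) ^ edgeCount H ≤
      ∏ e ∈ orientedEdges H, (#(pairGraph D e) : ℝ) := by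
    rw [edgeCount_eq_card_orientedEdges, ← prod_const]
    exact prod_le_prod (fun _ _ => mul_nonneg (by linarith) (by positivity)) hpair
  have hcopies : (n : ℝ) ^ k * ∏ e ∈ orientedEdges H, (#(pairGraph D e) : ℝ) ≤
      copyCount H (G.deleteEdges X) * n ^ (2 * edgeCount H) := by
    rw [copyCount_eq_card, edgeCount_eq_card_orientedEdges]
    exact_mod_cast pow_mul_prod_card_pairGraph_le D
      (fun e he => (mem_orientedEdges.1 he).1.ne) (pairwiseDisjoint_orientedEdges hH)
  rw [div_pow, ← pow_mul, ← mul_div_assoc]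
  refine div_le_of_le_mul₀ (by positivity) (by positivity) (le_trans ?_ hcopies)
  calc (1 - ξ) ^ edgeCount H * (n : ℝ) ^ k * m ^ edgeCount H
      = n ^ k * ((1 - ξ) * m) ^ edgeCount H := by rw [mul_pow]; ring
    _ ≤ n ^ k * ∏ e ∈ orientedEdges H, (#(pairGraph D e) : ℝ) := by gcongr

end Matching

section Robustness

variable {H : SimpleGraph (Fin k)} {G : SimpleGraph (Fin k × Fin n)} {m : ℕ} {lam ε γ N β b : ℝ}

lemma div_pow_le_choose {m N : ℕ} (h : m ≤ N) : ((N : ℝ) / m) ^ m ≤ N.choose m := by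
  induction m generalizing N with
  | zero => simp
  | succ m ih =>
    obtain ⟨N, rfl⟩ : ∃ N', N = N' + 1 := ⟨N - 1, by omega⟩
    have hchoose : ((N + 1).choose (m + 1) : ℝ) = (N + 1 : ℕ) / (m + 1 : ℕ) * N.choose m := by
      rw [div_mul_eq_mul_div, eq_div_iff (by positivity)]
      exact_mod_cast (Nat.add_one_mul_choose_eq N m).symm
    rw [hchoose, pow_succ']
    refine mul_le_mul_of_nonneg_left (le_trans ?_ (ih (by omega))) (by positivity)
    rcases m.eq_zero_or_pos with rfl | hm
    · simp
    have hm' : (0 : ℝ) < m := by exact_mod_cast hm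
    have hmN : (m : ℝ) ≤ N := by exact_mod_cast Nat.le_of_succ_le_succ h
    gcongr ?_ ^ m
    rw [div_le_div_iff₀ (by positivity) hm']
    push_cast
    linarith

lemma MemFamily.le_sq {i j : Fin k} (hG : MemFamily H m G) (hij : H.Adj i j) : m ≤ n ^ 2 := by
  rw [← hG.2 i j hij, pairCount]
  exact (Finite.card_subtype_le _).trans_eq (by simp [sq])

/-- `G` keeps at least `N` canonical copies of `H` after the deletion of any `t` edges. -/
def RobustlyContains (H : SimpleGraph (Fin k)) (G : SimpleGraph (Fin k × Fin n)) (t N : ℝ) :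
    Prop :=
  ∀ X ⊆ G.edgeSet, (X.ncard : ℝ) ≤ t → N ≤ copyCount H (G.deleteEdges X)

lemma MemFamily.exists_copyPoor (hG : MemFamily H m G) (hn : 0 < n) (hlam : 0 ≤ lam) (hε : 0 ≤ ε)
    (hreg : ∀ i j, H.Adj i j → LowerRegularPair ε lam G i j)
    (hfew : ¬ RobustlyContains H G (lam / 2 * ε ^ 2 * m) N) :
    ∃ Y ⊆ slotSet H G, CopyPoor (orientedEdges H) (orientedEdges H) ∅ ε
      (lam / 2 * (m / n ^ 2)) N Y := by
  simp only [RobustlyContains, not_forall, not_le] at hfew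
  obtain ⟨X, -, hX, hfew⟩ := hfew
  refine ⟨slotSet H (G.deleteEdges X), slotSet_mono (G.deleteEdges_le X), fun e he => ?_, ?_⟩
  · have hreg' := (hreg e.1 e.2 (mem_orientedEdges.1 he).2).lowerRegular hG he
    have hlost : #(pairGraph (slotSet H G) e \ pairGraph (slotSet H (G.deleteEdges X)) e) ≤
        X.ncard :=
      (card_pairGraph_sdiff_le _ _ e).trans (card_slotSet_sdiff_deleteEdges_le H G X)
    refine (hreg'.mono_density fun _ => by linarith).card_sdiff_le (by positivity) hε ?_
    calc (_ : ℝ) ≤ X.ncard := by exact_mod_cast hlost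
      _ ≤ lam / 2 * ε ^ 2 * m := hX
      _ = lam / 2 * (m / n ^ 2) * ε ^ 2 * n ^ 2 := by field_simp
  · rwa [empty_union, ← copyCount_eq_card]

lemma card_le_of_subsetWeight_le {Bad : SimpleGraph (Fin k × Fin n) → Prop}
    {P : Finset (Slot k n) → Prop} (hm : 0 < m) (hmn : m ≤ n ^ 2) (hβ : 0 < β)
    (hBad : ∀ G, Bad G → MemFamily H m G ∧ ∃ Y ⊆ slotSet H G, P Y)
    (hb : edgeCount H - Real.log β ≤ b)
    (hP : subsetWeight (m / n ^ 2) (orientedEdges H ×ˢ univ) P ≤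
      Real.exp (-b * (m / n ^ 2 * n ^ 2))) :
    (Nat.card {G // Bad G} : ℝ) ≤ β ^ m * ((n ^ 2).choose m : ℝ) ^ edgeCount H := by
  have hn : 0 < n := by by_contra!; simp_all
  set p : ℝ := m / n ^ 2 with hp
  have hp0 : 0 < p := by positivity
  have hpn : p * n ^ 2 = m := by rw [hp]; field_simp
  have hweight : Nat.card {G // Bad G} * p ^ (edgeCount H * m) ≤ β ^ m := by
    calc Nat.card {G // Bad G} * p ^ (edgeCount H * m)
        ≤ subsetWeight p (orientedEdges H ×ˢ univ) fun G => ∃ Y ⊆ G, P Y :=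
          card_mul_pow_le_subsetWeight hp0.le (f := fun G : {G // Bad G} => slotSet H G.1)
            (fun G G' h => Subtype.ext (slotSet_injOn (hBad _ G.2).1.1 (hBad _ G'.2).1.1 h))
            (fun _ => slotSet_subset) (fun G => (hBad _ G.2).1.card_slotSet)
            fun G => (hBad _ G.2).2
      _ ≤ Real.exp (p * #(orientedEdges H ×ˢ (univ : Finset (Fin n × Fin n)))) *
            Real.exp (-b * (p * n ^ 2)) :=
          (subsetWeight_exists_subset_le hp0.le).trans (by gcongr)
      _ = Real.exp ((edgeCount H - b) * m) := by
          rw [card_slots, ← edgeCount_eq_card_orientedEdges, ← Real.exp_add, ← hpn]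
          congr 1
          ring
      _ ≤ Real.exp (m * Real.log β) := by
          rw [mul_comm (m : ℝ)]
          gcongr
          linarith
      _ = β ^ m := by rw [Real.exp_nat_mul, Real.exp_log hβ]
  have hchoose : 1 ≤ p ^ m * ((n ^ 2).choose m : ℝ) := by
    have h := div_pow_le_choose hmn
    rwa [Nat.cast_pow, ← inv_div, ← hp, inv_pow, inv_le_iff_one_le_mul₀' (by positivity)] at h
  calc (Nat.card {G // Bad G} : ℝ)
      ≤ Nat.card {G // Bad G} * (p ^ m * ((n ^ 2).choose m : ℝ)) ^ edgeCount H :=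
        le_mul_of_one_le_right (by positivity) (one_le_pow₀ hchoose)
    _ = Nat.card {G // Bad G} * p ^ (edgeCount H * m) * ((n ^ 2).choose m : ℝ) ^ edgeCount H := by
        rw [mul_pow, ← pow_mul, mul_comm m]
        ring
    _ ≤ β ^ m * ((n ^ 2).choose m : ℝ) ^ edgeCount H := by gcongr

lemma SparseEmbedding.card_not_robustlyContains_le {δ : ℝ → ℝ} {C : ℝ} {i j : Fin k}
    (hS : SparseEmbedding (orientedEdges H) (orientedEdges H) (lam / 2) b δ C ε γ)
    (hij : H.Adj i j) (hH : 1 ≤ twoDensity H) (hlam : 0 ≤ lam) (hε : 0 ≤ ε) (hβ : 0 < β)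
    (hb : edgeCount H - Real.log β ≤ b) (hC : 0 < C) (hn : 1 ≤ n)
    (hm : C * (n : ℝ) ^ (2 - 1 / twoDensity H) ≤ m) :
    (Nat.card {G : SimpleGraph (Fin k × Fin n) //
        (MemFamily H m G ∧ ∀ i j, H.Adj i j → LowerRegularPair ε lam G i j) ∧
        ¬ RobustlyContains H G (lam / 2 * ε ^ 2 * m)
          (γ * (n : ℝ) ^ k * ((m : ℝ) / (n : ℝ) ^ 2) ^ edgeCount H)} : ℝ)
      ≤ β ^ m * ((n ^ 2).choose m : ℝ) ^ edgeCount H := by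
  have hn0 : (0 : ℝ) < n := by exact_mod_cast hn
  rcases lt_or_ge (n ^ 2) m with hmn | hmn
  · rw [Nat.card_eq_zero.2 (.inl ⟨fun G => (G.2.1.1.le_sq hij).not_gt hmn⟩), Nat.cast_zero]
    positivity
  have hm0 : 0 < m := by
    rw [← Nat.cast_pos (α := ℝ)]
    exact lt_of_lt_of_le (by positivity) hm
  refine card_le_of_subsetWeight_le hm0 hmn hβ
    (fun G hG => ⟨hG.1.1, hG.1.1.exists_copyPoor hn hlam hε hG.1.2 hG.2⟩) hb ?_
  rw [edgeCount_eq_card_orientedEdges]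
  refine hS n ((n : ℝ) ^ (-(1 / twoDensity H))) _ (by positivity) ?_
    (fun e he => isSpread_rpow_neg_inv_twoDensity hH hn he) ?_ ?_ ∅ (by simp) (by simp)
  · have hinv : 1 / twoDensity H ≤ 1 := (div_le_one (by linarith)).2 hH
    rw [← Real.rpow_add_one hn0.ne']
    exact Real.one_le_rpow (by exact_mod_cast hn) (by linarith)
  · rw [le_div_iff₀ (by positivity), mul_assoc, ← Real.rpow_natCast (n : ℝ) 2, ← Real.rpow_add hn0]
    rwa [neg_add_eq_sub, Nat.cast_ofNat]
  · rw [div_le_one (by positivity)]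
    exact_mod_cast hmn

end Robustness

/-- **Robust version of the K£R conjecture** (Theorem 3 with `H' = H` and no dense graph
`D`). For every `H` and `λ, β > 0` there exist `C, ε, ξ, γ > 0` such that for sufficiently
large `n` and `m ≥ C n^(2 - 1/m₂(H))`, all but at most `β^m C(n², m)^(e(H))` graphs
`G ∈ 𝒢(H, n, m, ε, λ)` satisfy: for every `X ⊆ E(G)` with `|X| ≤ ξ m`, the graph `G \ X`
contains at least `γ n^(v(H)) (m/n²)^(e(H))` canonical copies of `H`. -/
theorem klr_robust (k : ℕ) (H : SimpleGraph (Fin k)) (lam β : ℝ)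
    (hlam : 0 < lam) (hβ : 0 < β) :
    ∃ C ε ξ γ : ℝ, 0 < C ∧ 0 < ε ∧ 0 < ξ ∧ 0 < γ ∧
      ∃ n₀ : ℕ, ∀ n : ℕ, n₀ ≤ n → ∀ m : ℕ,
        C * (n : ℝ) ^ (2 - 1 / twoDensity H) ≤ (m : ℝ) →
        (Nat.card {G : SimpleGraph (Fin k × Fin n) //
            (MemFamily H m G ∧ ∀ i j, H.Adj i j → LowerRegularPair ε lam G i j) ∧
            ¬ (∀ X : Set (Sym2 (Fin k × Fin n)), X ⊆ G.edgeSet → (X.ncard : ℝ) ≤ ξ * m →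
                γ * (n : ℝ) ^ k * ((m : ℝ) / (n : ℝ) ^ 2) ^ edgeCount H ≤
                  (copyCount H (G.deleteEdges X) : ℝ))} : ℝ)
          ≤ β ^ m * ((n ^ 2).choose m : ℝ) ^ edgeCount H := by
  by_cases hH : ∀ a b c, H.Adj a b → H.Adj a c → b = c
  · refine ⟨1, 1, 1 / 2, (1 - 1 / 2) ^ edgeCount H, one_pos, one_pos, by norm_num, by positivity, 0,
      fun n _ m _ => ?_⟩
    rw [Nat.card_eq_zero.2 (.inl ⟨fun G => G.2.2 fun X _ hX =>
      G.2.1.1.le_copyCount_deleteEdges hH (by norm_num) hX⟩), Nat.cast_zero]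
    positivity
  · push Not at hH
    obtain ⟨a, b, c, hab, hac, hbc⟩ := hH
    obtain ⟨C, ε, γ, hC, hε, hγ, hS⟩ := exists_sparseEmbedding (E₀ := orientedEdges H)
      (fun e he => (mem_orientedEdges.1 he).1) Subset.rfl (half_pos hlam)
      (le_max_left 0 (edgeCount H - Real.log β)) (δ := 1) fun _ _ => one_pos
    exact ⟨C, ε, lam / 2 * ε ^ 2, γ, hC, hε, by positivity, hγ, 1, fun n hn m hm =>
      hS.card_not_robustlyContains_le hab (one_le_twoDensity hab hac hbc) hlam.le hε.le hβ
        (le_max_right _ _) hC hn hm⟩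
end
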